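/- arXiv:1708.04310 — 4 statements merged into one kernel-verified Lean document; each statement's English description precedes it below -/
import Mathlib

section
/- Let p ≥ 1, let δ(ζ) = Σ_{j=0}^p δ_j ζ^j and μ(ζ) = Σ_{j=0}^p μ_j ζ^j be real polynomials of degree at most p (at least one of them of degree exactly p) that have no common divisor, and suppose that μ(ζ) ≠ 0 and Re(δ(ζ)/μ(ζ)) > 0 for every complex ζ with |ζ| < 1. Then there exists a symmetric positive definite matrix G = (g_{ij}) ∈ ℝ^{p×p} such that for every N ≥ 1, every inner product ⟨·,·⟩ on ℝ^N, and all vectors w_0, …, w_p ∈ ℝ^N, one has ⟨Σ_{i=0}^p δ_i w_{p−i}, Σ_{i=0}^p μ_i w_{p−i}⟩ ≥ Σ_{i,j=1}^p g_{ij} ⟨w_i, w_j⟩ − Σ_{i,j=1}^p g_{ij} ⟨w_{i−1}, w_{j−1}⟩. -/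
open Matrix

/-!
Read `∑ i, δ_i w_{p-i}` and `∑ i, μ_i w_{p-i}` as the two ports of a shift-invariant linear system
whose state at time `n` is `(w_n, …, w_{n+p-1})`. The matrix `G` sought is a quadratic storage
function for the supply rate `⟨δw, μw⟩`.

*Existence of `G`.* By continuity, `Re (δ(ζ) conj μ(ζ)) ≥ 0` on the unit circle, and there it equals
`e(Re ζ)` for a real polynomial `e` of degree at most `p` (`exists_circle_poly`, via Chebyshev
polynomials). A polynomial that is nonnegative on `(-1, 1)` splits into factors each of which is a
sum of terms `|a(ζ)|²` on the circle, so `e(Re ζ) = ∑ₖ |aₖ(ζ)|²` with real `aₖ` of degree at most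
`p` (`isCircleSOS_of_nonneg`; a sum of squares suffices, so the sharper single-square Fejér–Riesz
factorization is not needed). Hence the symmetric coefficient matrix
`(δ_i μ_j + μ_i δ_j) / 2 - ∑ₖ aₖ,ᵢ aₖ,ⱼ` has vanishing diagonal sums (`diag_sum_eq_zero`), which
makes its quadratic form in `w` a difference `V(w_1, …, w_p) - V(w_0, …, w_{p-1})`
(`telescoping`). This gives `⟨δw, μw⟩ = V(w_1, …) - V(w_0, …) + ∑ₖ ‖aₖ w‖²` (`storage_identity`).

*Positive definiteness.* From an initial state `x`, follow the trajectory of `(δ + μ) w = 0`. The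
polynomial `δ + μ` has no zero in the *closed* unit disk: at a zero,
`Re (δ conj μ) = -|μ|²`, which forces `μ = δ = 0` and contradicts coprimality. Hence `w → 0` and so
`V → 0`, while `V` drops by at least `|μw|²` at every step, so `V(x) ≥ 0`. If `V(x) = 0`, then
`μw = 0 = δw` along the whole trajectory, and coprimality gives `w = 0` (`storage_posDef`).
-/

open Polynomial

/-! ### Nonnegative polynomials on `(-1, 1)` as sums of squares on the circle -/

/-- `e(Re z)` agrees on the unit circle with a finite sum `∑ₖ |aₖ(z)|²`, where the `aₖ` are real
polynomials of degree at most `p`. -/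
def IsCircleSOS (p : ℕ) (e : ℝ[X]) : Prop :=
  ∃ (ι : Type) (_ : Fintype ι) (a : ι → ℝ[X]), (∀ k, (a k).natDegree ≤ p) ∧
    ∀ z : ℂ, ‖z‖ = 1 → e.eval z.re = ∑ k, ‖aeval z (a k)‖ ^ 2

lemma IsCircleSOS.mono {p q : ℕ} {e : ℝ[X]} (h : IsCircleSOS p e) (hpq : p ≤ q) :
    IsCircleSOS q e := by
  obtain ⟨ι, _, a, ha, h⟩ := h
  exact ⟨ι, _, a, fun k => (ha k).trans hpq, h⟩

lemma IsCircleSOS.add {p : ℕ} {e f : ℝ[X]} (he : IsCircleSOS p e) (hf : IsCircleSOS p f) :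
    IsCircleSOS p (e + f) := by
  obtain ⟨ι, _, a, ha, he⟩ := he
  obtain ⟨κ, _, b, hb, hf⟩ := hf
  refine ⟨ι ⊕ κ, inferInstance, Sum.elim a b, ?_, fun z hz => ?_⟩
  · rintro (k | k)
    exacts [ha k, hb k]
  · simp [he z hz, hf z hz]

lemma IsCircleSOS.mul {p q : ℕ} {e f : ℝ[X]} (he : IsCircleSOS p e) (hf : IsCircleSOS q f) :
    IsCircleSOS (p + q) (e * f) := by
  obtain ⟨ι, _, a, ha, he⟩ := he
  obtain ⟨κ, _, b, hb, hf⟩ := hf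
  refine ⟨ι × κ, inferInstance, fun k => a k.1 * b k.2, fun k => ?_, fun z hz => ?_⟩
  · exact natDegree_mul_le.trans (add_le_add (ha _) (hb _))
  · simp [he z hz, hf z hz, Fintype.sum_mul_sum, Fintype.sum_prod_type, mul_pow]

lemma IsCircleSOS.single {p : ℕ} {e : ℝ[X]} (a : ℝ[X]) (ha : a.natDegree ≤ p)
    (h : ∀ z : ℂ, ‖z‖ = 1 → e.eval z.re = ‖aeval z a‖ ^ 2) : IsCircleSOS p e :=
  ⟨Unit, inferInstance, fun _ => a, fun _ => ha, fun z hz => by simp [h z hz]⟩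

lemma isCircleSOS_C {c : ℝ} (hc : 0 ≤ c) (p : ℕ) : IsCircleSOS p (C c) := by
  refine .single (C (√c)) (by simp) fun z _ => ?_
  simp [Real.sq_sqrt hc]

lemma normSq_eq_one {z : ℂ} (hz : ‖z‖ = 1) : z.re * z.re + z.im * z.im = 1 := by
  rw [← Complex.normSq_apply, Complex.normSq_eq_norm_sq, hz, one_pow]

lemma isCircleSOS_one_sub_X : IsCircleSOS 1 (1 - X) := by
  refine .single (C (√(1 / 2)) * (1 - X)) ?_ fun z hz => ?_
  · compute_degree
  · have h := normSq_eq_one hz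
    have h2 : ‖1 - z‖ ^ 2 = 2 * (1 - z.re) := by
      rw [← Complex.normSq_eq_norm_sq, Complex.normSq_apply]
      simp
      linarith
    have h3 : √(1 / 2 : ℝ) ^ 2 = 1 / 2 := Real.sq_sqrt (by norm_num)
    simp only [map_mul, map_sub, map_one, aeval_C, aeval_X, norm_mul, mul_pow, h2,
      Complex.coe_algebraMap, Complex.norm_real, Real.norm_eq_abs, sq_abs, h3]
    simp

lemma isCircleSOS_one_add_X : IsCircleSOS 1 (1 + X) := by
  refine .single (C (√(1 / 2)) * (1 + X)) ?_ fun z hz => ?_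
  · compute_degree
  · have h := normSq_eq_one hz
    have h2 : ‖1 + z‖ ^ 2 = 2 * (1 + z.re) := by
      rw [← Complex.normSq_eq_norm_sq, Complex.normSq_apply]
      simp
      linarith
    have h3 : √(1 / 2 : ℝ) ^ 2 = 1 / 2 := Real.sq_sqrt (by norm_num)
    simp only [map_mul, map_add, map_one, aeval_C, aeval_X, norm_mul, mul_pow, h2,
      Complex.coe_algebraMap, Complex.norm_real, Real.norm_eq_abs, sq_abs, h3]
    simp

/-- On the circle, `z² - 2cz + 1 = z (z - 2c + conj z) = 2z (Re z - c)`. -/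
lemma isCircleSOS_sub_sq (c : ℝ) : IsCircleSOS 2 ((X - C c) ^ 2) := by
  refine .single (C (1 / 2) * (X ^ 2 - C (2 * c) * X + 1)) ?_ fun z hz => ?_
  · compute_degree
  · have h := normSq_eq_one hz
    have hz' : z ^ 2 - (2 * c : ℝ) * z + 1 = z * ((2 * (z.re - c) : ℝ) : ℂ) := by
      apply Complex.ext
      · simp [pow_two]; linarith
      · simp [pow_two]; ring
    have h2 : ‖z ^ 2 - (2 * c : ℝ) * z + 1‖ ^ 2 = (2 * (z.re - c)) ^ 2 := by
      rw [hz', norm_mul, hz, one_mul, Complex.norm_real, Real.norm_eq_abs, sq_abs]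
    have h3 : aeval z (X ^ 2 - C (2 * c) * X + 1 : ℝ[X]) = z ^ 2 - (2 * c : ℝ) * z + 1 := by
      simp
    rw [map_mul, norm_mul, mul_pow, h3, h2]
    simp
    ring

lemma eval_nonneg_of_right (q : ℝ[X]) {c d : ℝ} (hcd : c < d)
    (h : ∀ x, c < x → x < d → 0 ≤ q.eval x) : 0 ≤ q.eval c := by
  have ht : Filter.Tendsto (fun x => q.eval x) (nhdsWithin c (Set.Ioi c)) (nhds (q.eval c)) :=
    (q.continuous.tendsto c).mono_left nhdsWithin_le_nhds
  refine ge_of_tendsto ht ?_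
  filter_upwards [Ioo_mem_nhdsGT hcd] with x hx using h x hx.1 hx.2

lemma eval_nonpos_of_left (q : ℝ[X]) {c d : ℝ} (hcd : d < c)
    (h : ∀ x, d < x → x < c → q.eval x ≤ 0) : q.eval c ≤ 0 := by
  have ht : Filter.Tendsto (fun x => q.eval x) (nhdsWithin c (Set.Iio c)) (nhds (q.eval c)) :=
    (q.continuous.tendsto c).mono_left nhdsWithin_le_nhds
  refine le_of_tendsto ht ?_
  filter_upwards [Ioo_mem_nhdsLT hcd] with x hx using h x hx.1 hx.2

/-- Induction on the degree: a complex root of `e` yields a factor positive on `(-1, 1)` up to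
a double zero, namely `(X - Re z)² + (Im z)²` for a nonreal root, `±(X - c)` for a real root `c`
outside `(-1, 1)`, and `(X - c)²` for one inside. Each such factor is a sum of squares. -/
lemma isCircleSOS_of_nonneg (n : ℕ) : ∀ e : ℝ[X], e.natDegree = n →
    (∀ x : ℝ, -1 < x → x < 1 → 0 ≤ e.eval x) → IsCircleSOS n e := by
  induction n using Nat.strong_induction_on with
  | _ n ih =>
  intro e hn he
  rcases Nat.eq_zero_or_pos n with h0 | hpos
  · obtain ⟨c, rfl⟩ := natDegree_eq_zero.mp (hn.trans h0)
    exact isCircleSOS_C (by simpa using he 0 (by norm_num) (by norm_num)) _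
  have he0 : e ≠ 0 := by
    rintro rfl
    simp at hn
    omega
  -- A sum-of-squares factor can be split off if the cofactor stays nonnegative on `(-1, 1)`.
  have step : ∀ (f q : ℝ[X]) (d : ℕ), e = f * q → f.natDegree = d → 0 < d → IsCircleSOS d f →
      (∀ x : ℝ, -1 < x → x < 1 → 0 ≤ q.eval x) → IsCircleSOS n e := by
    intro f q d hfq hfd hd hf hq
    have hf0 : f ≠ 0 := by rintro rfl; simp [he0] at hfq
    have hq0 : q ≠ 0 := by rintro rfl; simp [he0] at hfq
    have hdeg : n = d + q.natDegree := by
      rw [← hn, hfq, natDegree_mul hf0 hq0, hfd]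
    have := hf.mul (ih q.natDegree (by omega) q rfl hq)
    rwa [← hfq, ← hdeg] at this
  have hroot : ∃ z : ℂ, aeval z e = 0 := by
    refine IsAlgClosed.exists_aeval_eq_zero ℂ e ?_
    exact (natDegree_pos_iff_degree_pos.mp (hn ▸ hpos)).ne'
  obtain ⟨z, hz⟩ := hroot
  by_cases him : z.im = 0
  · have hc : e.eval z.re = 0 := by
      have hzr : z = algebraMap ℝ ℂ z.re := Complex.ext (by simp) (by simp [him])
      rw [hzr, aeval_algebraMap_apply] at hz
      simpa using hz
    generalize z.re = c at hc
    obtain ⟨q, hq⟩ := dvd_iff_isRoot.mpr hc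
    have hqe : ∀ x, e.eval x = (x - c) * q.eval x := fun x => by rw [hq]; simp
    rcases le_or_gt 1 c with h1 | h1
    · refine step (C c - X) (-q) 1 (by rw [hq]; ring) ?_ one_pos ?_ fun x hx hx' => ?_
      · rw [← natDegree_neg, neg_sub, natDegree_X_sub_C]
      · have : (C c - X : ℝ[X]) = C (c - 1) + (1 - X) := by simp
        rw [this]
        exact (isCircleSOS_C (by linarith) 1).add isCircleSOS_one_sub_X
      · have := he x hx hx'
        rw [hqe] at this
        rw [eval_neg]
        by_contra hcon
        nlinarith
    rcases le_or_gt c (-1) with h2 | h2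
    · refine step (X - C c) q 1 hq (natDegree_X_sub_C c) one_pos ?_ fun x hx hx' => ?_
      · have : (X - C c : ℝ[X]) = C (-1 - c) + (1 + X) := by simp; ring
        rw [this]
        exact (isCircleSOS_C (by linarith) 1).add isCircleSOS_one_add_X
      · have := he x hx hx'
        rw [hqe] at this
        by_contra hcon
        nlinarith
    -- At an interior root the cofactor changes sign, hence vanishes: the root is double.
    have hq1 : 0 ≤ q.eval c := eval_nonneg_of_right q h1 fun x hx hx' => by
      have := he x (by linarith) hx'
      rw [hqe] at this
      exact nonneg_of_mul_nonneg_right this (by linarith)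
    have hq2 : q.eval c ≤ 0 := eval_nonpos_of_left q h2 fun x hx hx' => by
      have := he x hx (by linarith)
      rw [hqe] at this
      by_contra hcon
      nlinarith
    obtain ⟨r, hr⟩ := dvd_iff_isRoot.mpr (le_antisymm hq2 hq1)
    have hre : ∀ x, e.eval x = (x - c) ^ 2 * r.eval x := fun x => by rw [hqe, hr]; simp; ring
    have hoff : ∀ x, -1 < x → x < 1 → x ≠ c → 0 ≤ r.eval x := fun x hx hx' hxc => by
      have := he x hx hx'
      rw [hre] at this
      have hs : 0 < (x - c) ^ 2 := by
        have := sub_ne_zero.mpr hxc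
        positivity
      exact nonneg_of_mul_nonneg_right this hs
    refine step ((X - C c) ^ 2) r 2 (by rw [hq, hr]; ring) ?_ two_pos (isCircleSOS_sub_sq c)
      fun x hx hx' => ?_
    · rw [natDegree_pow, natDegree_X_sub_C]
    · rcases eq_or_ne x c with rfl | hxc
      · exact eval_nonneg_of_right r hx' fun y hy hy' => hoff y (by linarith) hy' hy.ne'
      · exact hoff x hx hx' hxc
  · obtain ⟨q, hq⟩ := quadratic_dvd_of_aeval_eq_zero_im_ne_zero e hz him
    have hf : (X ^ 2 - C (2 * z.re) * X + C (‖z‖ ^ 2) : ℝ[X])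
        = (X - C z.re) ^ 2 + C (z.im ^ 2) := by
      rw [← Complex.normSq_eq_norm_sq, Complex.normSq_apply]
      simp only [map_mul, map_add, map_pow, map_ofNat]
      ring
    rw [hf] at hq
    refine step _ q 2 hq ?_ two_pos
      ((isCircleSOS_sub_sq _).add (isCircleSOS_C (sq_nonneg _) 2)) fun x hx hx' => ?_
    · rw [natDegree_add_C, natDegree_pow, natDegree_X_sub_C]
    · have := he x hx hx'
      rw [hq, eval_mul] at this
      refine nonneg_of_mul_nonneg_right this ?_
      simp
      positivity

/-! ### From vanishing on the circle to a telescoping quadratic form -/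

/-- Multiplied by `z ^ p`, the double sum is on the circle the polynomial with monomials
`T i j * z ^ (p + i - j)`; it has infinitely many zeros, so its coefficients, the sums of `T` over
the diagonals `i - j = m - p`, vanish. -/
lemma diag_sum_eq_zero (p : ℕ) (T : ℕ → ℕ → ℝ)
    (hT : ∀ z : ℂ, ‖z‖ = 1 → ∑ i ∈ Finset.range (p + 1), ∑ j ∈ Finset.range (p + 1),
      (T i j : ℂ) * (z ^ i * (starRingEnd ℂ) z ^ j) = 0) (m : ℕ) :
    ∑ i ∈ Finset.range (p + 1), ∑ j ∈ Finset.range (p + 1),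
      (if p + i - j = m then T i j else 0) = 0 := by
  set H : ℂ[X] := ∑ i ∈ Finset.range (p + 1), ∑ j ∈ Finset.range (p + 1),
    monomial (p + i - j) (T i j : ℂ) with hH
  have h0 : H = 0 := by
    refine eq_zero_of_infinite_isRoot H (Set.Infinite.mono (s := Metric.sphere (0 : ℂ) 1) ?_ ?_)
    · intro z hz
      have hz1 : ‖z‖ = 1 := by simpa using hz
      have hzc : z * (starRingEnd ℂ) z = 1 := by
        rw [Complex.mul_conj, Complex.normSq_eq_norm_sq, hz1]; simp
      have : H.eval z = z ^ p * ∑ i ∈ Finset.range (p + 1), ∑ j ∈ Finset.range (p + 1),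
          (T i j : ℂ) * (z ^ i * (starRingEnd ℂ) z ^ j) := by
        simp only [hH, eval_finsetSum, eval_monomial, Finset.mul_sum]
        refine Finset.sum_congr rfl fun i _ => Finset.sum_congr rfl fun j hj => ?_
        have hj : j ≤ p := Nat.lt_succ_iff.mp (Finset.mem_range.mp hj)
        have hpow : z ^ (p + i) = z ^ (p + i - j) * z ^ j := by
          rw [← pow_add]; congr 1; omega
        have : z ^ j * (starRingEnd ℂ) z ^ j = 1 := by rw [← mul_pow, hzc, one_pow]
        calc _ = (T i j : ℂ) * z ^ (p + i - j) * (z ^ j * (starRingEnd ℂ) z ^ j) := by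
              rw [this, mul_one]
          _ = (T i j : ℂ) * (z ^ (p + i - j) * z ^ j) * (starRingEnd ℂ) z ^ j := by ring
          _ = _ := by rw [← hpow]; ring
      show H.eval z = 0
      rw [this, hT z hz1, mul_zero]
    · have := (NormedSpace.sphere_nonempty (x := (0 : ℂ)) (r := 1)).mpr zero_le_one
      have hc : IsPreconnected (Metric.sphere (0 : ℂ) 1) :=
        isPreconnected_sphere (by simp) 0 1
      refine (hc.infinite_of_nontrivial ⟨1, by simp, -1, by simp, ?_⟩)
      norm_num
  have := congrArg (fun P => P.coeff m) h0
  simp only [hH, finsetSum_coeff, coeff_monomial, coeff_zero] at this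
  apply Complex.ofReal_injective
  push_cast [apply_ite]
  simpa using this

/-- The sum of `T` along the diagonal that ends at `(i - 1, j - 1)`, from the border of the quadrant
up to that entry; it is `0` if `i = 0` or `j = 0`. The offset by one makes
`T i j = diagPartial T (i + 1) (j + 1) - diagPartial T i j`. -/
def diagPartial (T : ℕ → ℕ → ℝ) (i j : ℕ) : ℝ :=
  ∑ k ∈ Finset.range (min i j), T (i - 1 - k) (j - 1 - k)

lemma diagPartial_succ (T : ℕ → ℕ → ℝ) (i j : ℕ) :
    diagPartial T (i + 1) (j + 1) = T i j + diagPartial T i j := by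
  unfold diagPartial
  rw [Nat.add_min_add_right, Finset.sum_range_succ']
  rw [add_comm]
  congr 1
  refine Finset.sum_congr rfl fun k _ => ?_
  congr 1 <;> omega

lemma diagPartial_comm {T : ℕ → ℕ → ℝ} (hT : ∀ i j, T i j = T j i) (i j : ℕ) :
    diagPartial T i j = diagPartial T j i := by
  unfold diagPartial
  rw [min_comm]
  exact Finset.sum_congr rfl fun k _ => hT _ _

/-- At the last row the partial diagonal sum is a complete diagonal of the `(p+1) × (p+1)` block. -/
lemma diagPartial_boundary (p : ℕ) (T : ℕ → ℕ → ℝ)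
    (hd : ∀ m, ∑ i ∈ Finset.range (p + 1), ∑ j ∈ Finset.range (p + 1),
      (if p + i - j = m then T i j else 0) = 0) {j : ℕ} (hj : j ≤ p) :
    diagPartial T (p + 1) (j + 1) = 0 := by
  rw [← hd (2 * p - j), Finset.sum_comm]
  have h1 : ∀ l ∈ Finset.range (p + 1), ∑ i ∈ Finset.range (p + 1),
      (if p + i - l = 2 * p - j then T i l else 0) = if l < j + 1 then T (p - j + l) l else 0 := by
    intro l hl
    have hl := Finset.mem_range.mp hl
    split_ifs with h
    · rw [Finset.sum_eq_single (p - j + l)]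
      · rw [if_pos (by omega)]
      · intro b _ hb
        rw [if_neg (by omega)]
      · intro hb
        exact absurd (Finset.mem_range.mpr (by omega)) hb
    · refine Finset.sum_eq_zero fun i hi => if_neg ?_
      have := Finset.mem_range.mp hi
      omega
  rw [Finset.sum_congr rfl h1, ← Finset.sum_filter]
  have h2 : (Finset.range (p + 1)).filter (fun l => l < j + 1) = Finset.range (j + 1) := by
    ext l; simp; omega
  rw [h2, ← Finset.sum_range_reflect]
  unfold diagPartial
  rw [Nat.add_min_add_right, min_eq_right hj]
  refine Finset.sum_congr rfl fun k hk => ?_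
  have := Finset.mem_range.mp hk
  congr 1; omega

/-- A symmetric form with vanishing diagonal sums is a difference of one `p × p` form evaluated on
the entries `1, …, p` and on the entries `0, …, p - 1`. It is linear in the products, which are
therefore replaced by an arbitrary array `b`. -/
lemma telescoping (p : ℕ) (T : ℕ → ℕ → ℝ) (hsymm : ∀ i j, T i j = T j i)
    (hd : ∀ m, ∑ i ∈ Finset.range (p + 1), ∑ j ∈ Finset.range (p + 1),
      (if p + i - j = m then T i j else 0) = 0) :
    ∃ G : Matrix (Fin p) (Fin p) ℝ, G.IsSymm ∧ ∀ b : ℕ → ℕ → ℝ,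
      ∑ i ∈ Finset.range (p + 1), ∑ j ∈ Finset.range (p + 1), T i j * b (p - i) (p - j) =
        (∑ i : Fin p, ∑ j : Fin p, G i j * b ((i : ℕ) + 1) ((j : ℕ) + 1)) -
        ∑ i : Fin p, ∑ j : Fin p, G i j * b i j := by
  set g : ℕ → ℕ → ℝ := fun i j => diagPartial T (p - 1 - i + 1) (p - 1 - j + 1) with hg
  refine ⟨Matrix.of fun i j => g i j, ?_, fun b => ?_⟩
  · ext i j
    exact diagPartial_comm hsymm _ _
  have hT : ∀ i j, T i j = diagPartial T (i + 1) (j + 1) - diagPartial T i j := fun i j => by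
    rw [diagPartial_succ]; ring
  have hb1 : ∀ j ∈ Finset.range (p + 1), diagPartial T (p + 1) (j + 1) = 0 := fun j hj =>
    diagPartial_boundary p T hd (Nat.lt_succ_iff.mp (Finset.mem_range.mp hj))
  have hb2 : ∀ j ∈ Finset.range (p + 1), diagPartial T (j + 1) (p + 1) = 0 := fun j hj => by
    rw [diagPartial_comm hsymm]; exact hb1 j hj
  have hz1 : ∀ j, diagPartial T 0 j = 0 := fun j => by simp [diagPartial]
  have hz2 : ∀ j, diagPartial T j 0 = 0 := fun j => by simp [diagPartial]
  have hL : ∑ i ∈ Finset.range (p + 1), ∑ j ∈ Finset.range (p + 1), T i j * b (p - i) (p - j) =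
      (∑ i ∈ Finset.range p, ∑ j ∈ Finset.range p,
        diagPartial T (i + 1) (j + 1) * b (p - i) (p - j)) -
      ∑ i ∈ Finset.range p, ∑ j ∈ Finset.range p,
        diagPartial T (i + 1) (j + 1) * b (p - (i + 1)) (p - (j + 1)) := by
    have e1 : ∑ i ∈ Finset.range (p + 1), ∑ j ∈ Finset.range (p + 1),
        diagPartial T (i + 1) (j + 1) * b (p - i) (p - j) = ∑ i ∈ Finset.range p,
        ∑ j ∈ Finset.range p, diagPartial T (i + 1) (j + 1) * b (p - i) (p - j) := by
      rw [Finset.sum_range_succ, Finset.sum_eq_zero (s := Finset.range (p + 1)), add_zero]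
      · refine Finset.sum_congr rfl fun i hi => ?_
        rw [Finset.sum_range_succ, hb2 i (by simp at hi ⊢; omega), zero_mul, add_zero]
      · intro j hj
        rw [hb1 j hj, zero_mul]
    have e2 : ∑ i ∈ Finset.range (p + 1), ∑ j ∈ Finset.range (p + 1),
        diagPartial T i j * b (p - i) (p - j) = ∑ i ∈ Finset.range p,
        ∑ j ∈ Finset.range p, diagPartial T (i + 1) (j + 1) * b (p - (i + 1)) (p - (j + 1)) := by
      rw [Finset.sum_range_succ', Finset.sum_eq_zero (s := Finset.range (p + 1)), add_zero]
      · refine Finset.sum_congr rfl fun i hi => ?_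
        rw [Finset.sum_range_succ', hz2, zero_mul, add_zero]
      · intro j hj
        rw [hz1, zero_mul]
    rw [← e1, ← e2, ← Finset.sum_sub_distrib]
    refine Finset.sum_congr rfl fun i _ => ?_
    rw [← Finset.sum_sub_distrib]
    refine Finset.sum_congr rfl fun j _ => ?_
    rw [hT i j]; ring
  have hF : ∀ c : ℕ → ℕ → ℝ, ∑ i : Fin p, ∑ j : Fin p, c i j =
      ∑ i ∈ Finset.range p, ∑ j ∈ Finset.range p, c (p - 1 - i) (p - 1 - j) := fun c => by
    rw [Finset.sum_range_reflect (fun i => ∑ j ∈ Finset.range p, c i (p - 1 - j)),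
      ← Fin.sum_univ_eq_sum_range (fun i => ∑ j ∈ Finset.range p, c i (p - 1 - j))]
    refine Finset.sum_congr rfl fun i _ => ?_
    rw [Finset.sum_range_reflect (fun j => c i j), Fin.sum_univ_eq_sum_range (fun j => c i j)]
  rw [hL]
  simp only [Matrix.of_apply]
  rw [hF fun i j => g i j * b (i + 1) (j + 1), hF fun i j => g i j * b i j]
  congr 1
  · refine Finset.sum_congr rfl fun i hi => Finset.sum_congr rfl fun j hj => ?_
    have := Finset.mem_range.mp hi
    have := Finset.mem_range.mp hj
    simp only [hg]
    congr 2 <;> omega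
  · refine Finset.sum_congr rfl fun i hi => Finset.sum_congr rfl fun j hj => ?_
    have := Finset.mem_range.mp hi
    have := Finset.mem_range.mp hj
    simp only [hg]
    congr 2 <;> omega

/-! ### The storage function -/

lemma aeval_mul_conj_aeval {p : ℕ} {q r : ℝ[X]} (hq : q.natDegree ≤ p) (hr : r.natDegree ≤ p)
    (z : ℂ) : aeval z q * (starRingEnd ℂ) (aeval z r) =
      ∑ i ∈ Finset.range (p + 1), ∑ j ∈ Finset.range (p + 1),
        ((q.coeff i * r.coeff j : ℝ) : ℂ) * (z ^ i * (starRingEnd ℂ) z ^ j) := by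
  rw [aeval_eq_sum_range' (Nat.lt_succ_iff.mpr hq), aeval_eq_sum_range' (Nat.lt_succ_iff.mpr hr),
    map_sum, Finset.sum_mul_sum]
  refine Finset.sum_congr rfl fun i _ => Finset.sum_congr rfl fun j _ => ?_
  simp only [Complex.real_smul, map_mul, map_pow, Complex.conj_ofReal, Complex.ofReal_mul]
  ring

/-- On the circle `Re (z ^ i * conj z ^ j) = cos ((i - j) arg z)` is the Chebyshev polynomial
`T (i - j)` at `Re z`. -/
lemma exists_circle_poly {p : ℕ} {q r : ℝ[X]} (hq : q.natDegree ≤ p) (hr : r.natDegree ≤ p) :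
    ∃ e : ℝ[X], e.natDegree ≤ p ∧ ∀ z : ℂ, ‖z‖ = 1 →
      e.eval z.re = (aeval z q * (starRingEnd ℂ) (aeval z r)).re := by
  refine ⟨∑ i ∈ Finset.range (p + 1), ∑ j ∈ Finset.range (p + 1),
    C (q.coeff i * r.coeff j) * Chebyshev.T ℝ ((i : ℤ) - j), ?_, fun z hz => ?_⟩
  · refine natDegree_sum_le_of_forall_le _ _ fun i hi => natDegree_sum_le_of_forall_le _ _
      fun j hj => (natDegree_C_mul_le _ _).trans ?_
    rw [Chebyshev.natDegree_T]
    have := Finset.mem_range.mp hi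
    have := Finset.mem_range.mp hj
    omega
  · rw [aeval_mul_conj_aeval hq hr, Complex.re_sum, eval_finsetSum]
    refine Finset.sum_congr rfl fun i _ => ?_
    rw [Complex.re_sum, eval_finsetSum]
    refine Finset.sum_congr rfl fun j _ => ?_
    have hzexp : z = Complex.exp (z.arg * Complex.I) := by
      conv_lhs => rw [← Complex.norm_mul_exp_arg_mul_I z, hz]
      simp
    have hre : z.re = Real.cos z.arg := by
      conv_lhs => rw [hzexp]
      exact Complex.exp_ofReal_mul_I_re _
    have hpow : z ^ i * (starRingEnd ℂ) z ^ j
        = Complex.exp (((((i : ℤ) - j : ℤ) : ℝ) * z.arg : ℝ) * Complex.I) := by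
      conv_lhs => rw [hzexp]
      rw [← Complex.exp_conj, ← Complex.exp_nat_mul, ← Complex.exp_nat_mul, ← Complex.exp_add]
      congr 1
      simp
      ring
    rw [Complex.re_ofReal_mul, hpow, Complex.exp_ofReal_mul_I_re, eval_mul, eval_C, hre,
      Chebyshev.T_real_cos]

/-- Inside the disk `δ conj μ = |μ|² (δ / μ)`; the closed disk follows by continuity. -/
lemma re_mul_conj_nonneg (δ μ : ℝ[X])
    (hpos : ∀ z : ℂ, ‖z‖ < 1 → aeval z μ ≠ 0 ∧ 0 < (aeval z δ / aeval z μ).re)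
    {z : ℂ} (hz : ‖z‖ ≤ 1) : 0 ≤ (aeval z δ * (starRingEnd ℂ) (aeval z μ)).re := by
  have hin : ∀ z : ℂ, ‖z‖ < 1 → 0 ≤ (aeval z δ * (starRingEnd ℂ) (aeval z μ)).re := by
    intro z hz
    obtain ⟨h0, h1⟩ := hpos z hz
    have : aeval z δ * (starRingEnd ℂ) (aeval z μ)
        = ((Complex.normSq (aeval z μ) : ℝ) : ℂ) * (aeval z δ / aeval z μ) := by
      rw [← Complex.mul_conj]
      field_simp
    rw [this, Complex.re_ofReal_mul]
    exact mul_nonneg (Complex.normSq_nonneg _) h1.le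
  have hcl : IsClosed {z : ℂ | 0 ≤ (aeval z δ * (starRingEnd ℂ) (aeval z μ)).re} := by
    refine isClosed_le continuous_const (Complex.continuous_re.comp ?_)
    exact (Polynomial.continuous_aeval δ).mul
      (Complex.continuous_conj.comp (Polynomial.continuous_aeval μ))
  have hmem : z ∈ closure (Metric.ball (0 : ℂ) 1) := by
    rw [closure_ball _ one_ne_zero]
    simpa using hz
  exact closure_minimal (fun w hw => hin w (by simpa using hw)) hcl hmem

/-- The energy balance: supply = increase of storage + dissipated squares. The array `b` stands for
the Gram matrix of `w 0, w 1, …`. -/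
lemma storage_identity {p : ℕ} {δ μ : ℝ[X]} (hδ : δ.natDegree ≤ p) (hμ : μ.natDegree ≤ p)
    (hre : ∀ z : ℂ, ‖z‖ ≤ 1 → 0 ≤ (aeval z δ * (starRingEnd ℂ) (aeval z μ)).re) :
    ∃ (ι : Type) (_ : Fintype ι) (a : ι → ℝ[X]) (G : Matrix (Fin p) (Fin p) ℝ), G.IsSymm ∧
      ∀ b : ℕ → ℕ → ℝ, (∀ i j, b i j = b j i) →
        ∑ i ∈ Finset.range (p + 1), ∑ j ∈ Finset.range (p + 1),
          δ.coeff i * μ.coeff j * b (p - i) (p - j) =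
        (∑ i : Fin p, ∑ j : Fin p, G i j * b ((i : ℕ) + 1) ((j : ℕ) + 1)) -
        (∑ i : Fin p, ∑ j : Fin p, G i j * b i j) +
        ∑ k, ∑ i ∈ Finset.range (p + 1), ∑ j ∈ Finset.range (p + 1),
          (a k).coeff i * (a k).coeff j * b (p - i) (p - j) := by
  obtain ⟨e, hep, he⟩ := exists_circle_poly hδ hμ
  have hsos : IsCircleSOS p e := by
    refine (isCircleSOS_of_nonneg _ e rfl fun x hx hx' => ?_).mono hep
    have hn : ‖Complex.exp (Real.arccos x * Complex.I)‖ = 1 := Complex.norm_exp_ofReal_mul_I _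
    have := he _ hn
    rw [Complex.exp_ofReal_mul_I_re, Real.cos_arccos hx.le hx'.le] at this
    rw [this]
    exact hre _ hn.le
  obtain ⟨ι, _, a, ha, hsum⟩ := hsos
  set T : ℕ → ℕ → ℝ := fun i j => (δ.coeff i * μ.coeff j + μ.coeff i * δ.coeff j) / 2 -
    ∑ k, (a k).coeff i * (a k).coeff j with hT
  have hTs : ∀ i j, T i j = T j i := fun i j => by
    simp only [hT]
    congr 1
    · ring
    · exact Finset.sum_congr rfl fun k _ => mul_comm _ _
  have expand : ∀ c : ℕ → ℕ → ℂ, ∑ i ∈ Finset.range (p + 1), ∑ j ∈ Finset.range (p + 1),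
      (T i j : ℂ) * c i j =
      ((∑ i ∈ Finset.range (p + 1), ∑ j ∈ Finset.range (p + 1),
          ((δ.coeff i * μ.coeff j : ℝ) : ℂ) * c i j) +
        ∑ i ∈ Finset.range (p + 1), ∑ j ∈ Finset.range (p + 1),
          ((μ.coeff i * δ.coeff j : ℝ) : ℂ) * c i j) / 2 -
      ∑ k, ∑ i ∈ Finset.range (p + 1), ∑ j ∈ Finset.range (p + 1),
          (((a k).coeff i * (a k).coeff j : ℝ) : ℂ) * c i j := by
    intro c
    rw [Finset.sum_comm (s := Finset.univ), ← Finset.sum_add_distrib, Finset.sum_div,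
      ← Finset.sum_sub_distrib]
    refine Finset.sum_congr rfl fun i _ => ?_
    rw [Finset.sum_comm (s := Finset.univ), ← Finset.sum_add_distrib, Finset.sum_div,
      ← Finset.sum_sub_distrib]
    refine Finset.sum_congr rfl fun j _ => ?_
    rw [← Finset.sum_mul]
    simp only [hT]
    push_cast
    ring
  have hcirc : ∀ z : ℂ, ‖z‖ = 1 → ∑ i ∈ Finset.range (p + 1), ∑ j ∈ Finset.range (p + 1),
      (T i j : ℂ) * (z ^ i * (starRingEnd ℂ) z ^ j) = 0 := by
    intro z hz
    rw [expand, ← aeval_mul_conj_aeval hδ hμ, ← aeval_mul_conj_aeval hμ hδ,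
      Finset.sum_congr rfl fun k _ => (aeval_mul_conj_aeval (ha k) (ha k) z).symm]
    have h1 : aeval z μ * (starRingEnd ℂ) (aeval z δ)
        = (starRingEnd ℂ) (aeval z δ * (starRingEnd ℂ) (aeval z μ)) := by
      simp [mul_comm]
    rw [h1, Complex.add_conj, ← he z hz, hsum z hz]
    simp [Complex.mul_conj, Complex.normSq_eq_norm_sq]
  obtain ⟨G, hG, hGb⟩ := telescoping p T hTs (diag_sum_eq_zero p T hcirc)
  refine ⟨ι, inferInstance, a, G, hG, fun b hb => ?_⟩
  rw [← hGb b]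
  have hswap : ∑ i ∈ Finset.range (p + 1), ∑ j ∈ Finset.range (p + 1),
      μ.coeff i * δ.coeff j * b (p - i) (p - j) = ∑ i ∈ Finset.range (p + 1),
      ∑ j ∈ Finset.range (p + 1), δ.coeff i * μ.coeff j * b (p - i) (p - j) := by
    rw [Finset.sum_comm]
    refine Finset.sum_congr rfl fun i _ => Finset.sum_congr rfl fun j _ => ?_
    rw [hb (p - j)]; ring
  have hx := expand fun i j => (b (p - i) (p - j) : ℂ)
  norm_cast at hx
  rw [hx]
  rw [hswap]
  ring

/-! ### Linear recurrences -/

lemma summable_of_first_order {c : ℂ} (hc : ‖c‖ < 1) {w : ℕ → ℂ}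
    (h : Summable fun n => ‖w (n + 1) - c * w n‖) : Summable fun n => ‖w n‖ := by
  set U := ∑' n, ‖w (n + 1) - c * w n‖
  refine summable_of_sum_range_le (c := (‖w 0‖ + U) / (1 - ‖c‖)) (fun _ => norm_nonneg _) fun n => ?_
  rw [le_div_iff₀ (by linarith)]
  have h1 : ∑ i ∈ Finset.range n, ‖w (i + 1) - c * w i‖ ≤ U :=
    h.sum_le_tsum _ fun _ _ => norm_nonneg _
  have h2 : ∑ i ∈ Finset.range n, ‖w (i + 1)‖ ≤
      ∑ i ∈ Finset.range n, ‖w (i + 1) - c * w i‖ + ‖c‖ * ∑ i ∈ Finset.range n, ‖w i‖ := by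
    rw [Finset.mul_sum, ← Finset.sum_add_distrib]
    refine Finset.sum_le_sum fun i _ => ?_
    calc ‖w (i + 1)‖ = ‖(w (i + 1) - c * w i) + c * w i‖ := by rw [sub_add_cancel]
      _ ≤ _ := (norm_add_le _ _).trans (by rw [norm_mul])
  have h3 : ∑ i ∈ Finset.range n, ‖w i‖ ≤ ∑ i ∈ Finset.range n, ‖w (i + 1)‖ + ‖w 0‖ := by
    rw [← Finset.sum_range_succ' (fun i => ‖w i‖), Finset.sum_range_succ]
    linarith [norm_nonneg (w n)]
  linarith

/-- The forward shift `(w n) ↦ (w (n + 1))` on sequences, as a linear endomorphism, so that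
recurrences become polynomials in it. -/
def shift (K : Type) [Field K] : Module.End K (ℕ → K) := LinearMap.funLeft K K Nat.succ

lemma shift_pow_apply {K : Type} [Field K] (k : ℕ) (w : ℕ → K) (n : ℕ) :
    (shift K ^ k) w n = w (n + k) := by
  induction k generalizing n with
  | zero => simp
  | succ k ih =>
    rw [pow_succ', Module.End.mul_apply]
    change ((shift K ^ k) w) (n + 1) = _
    rw [ih]
    congr 1; omega

/-- The recurrence with coefficients `q_i` on `w_{n+p-i}` is the reflected polynomial of `q` in the
shift. -/
lemma aeval_shift_reflect {K : Type} [Field K] {p : ℕ} {q : K[X]} (hq : q.natDegree ≤ p)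
    (w : ℕ → K) (n : ℕ) : aeval (shift K) (reflect p q) w n =
      ∑ i ∈ Finset.range (p + 1), q.coeff i * w (n + (p - i)) := by
  have hr : (reflect p q).natDegree < p + 1 := by
    rw [Nat.lt_succ_iff, natDegree_le_iff_coeff_eq_zero]
    intro N hN
    rw [coeff_reflect, revAt_eq_self_of_lt hN]
    exact coeff_eq_zero_of_natDegree_lt (by omega)
  rw [aeval_eq_sum_range' hr, LinearMap.sum_apply, Finset.sum_apply, ← Finset.sum_range_reflect]
  refine Finset.sum_congr rfl fun i hi => ?_
  have := Finset.mem_range.mp hi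
  rw [LinearMap.smul_apply, Pi.smul_apply, shift_pow_apply, coeff_reflect, revAt_le (by omega),
    smul_eq_mul, Nat.add_sub_cancel, Nat.sub_sub_self (by omega)]

lemma summable_of_roots (s : Multiset ℂ) (hs : ∀ c ∈ s, ‖c‖ < 1) (w : ℕ → ℂ)
    (h : Summable fun n => ‖aeval (shift ℂ) (s.map fun c => X - C c).prod w n‖) :
    Summable fun n => ‖w n‖ := by
  induction s using Multiset.induction_on generalizing w with
  | empty => simpa using h
  | cons c s ih =>
    rw [Multiset.map_cons, Multiset.prod_cons, map_mul, Module.End.mul_apply] at h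
    refine ih (fun c hc => hs c (Multiset.mem_cons_of_mem hc)) _
      (summable_of_first_order (hs c (Multiset.mem_cons_self c s)) ?_)
    refine h.congr fun n => ?_
    simp [shift, LinearMap.funLeft]

lemma reflect_root {p : ℕ} {q : ℝ[X]} (hq : q.natDegree ≤ p) {c : ℂ} (hc : c ≠ 0)
    (h : aeval c (reflect p q) = 0) : aeval c⁻¹ q = 0 := by
  let _ : Invertible c⁻¹ := invertibleOfNonzero (inv_ne_zero hc)
  have := (eval₂_reflect_eq_zero_iff (algebraMap ℝ ℂ) c⁻¹ p q hq).mp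
  rw [invOf_eq_inv, inv_inv] at this
  exact this h

/-- The characteristic polynomial `reflect p γ` has all its roots in the open unit disk, because the
nonzero ones are the inverses of roots of `γ`. -/
lemma tendsto_zero_of_recurrence {p : ℕ} {γ : ℝ[X]} (hγ : γ.natDegree ≤ p)
    (hroot : ∀ z : ℂ, ‖z‖ ≤ 1 → aeval z γ ≠ 0) {w : ℕ → ℝ}
    (hw : ∀ n, ∑ i ∈ Finset.range (p + 1), γ.coeff i * w (n + (p - i)) = 0) :
    Filter.Tendsto w Filter.atTop (nhds 0) := by
  have hγ0 : γ ≠ 0 := by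
    rintro rfl
    exact hroot 0 (by simp) (by simp)
  set Q : ℂ[X] := reflect p (γ.map (algebraMap ℝ ℂ)) with hQ
  have hQmap : Q = (reflect p γ).map (algebraMap ℝ ℂ) := by
    ext n
    simp [hQ, coeff_reflect]
  have hQ0 : Q ≠ 0 := by
    rw [hQ, Ne, reflect_eq_zero_iff, Polynomial.map_eq_zero]
    exact hγ0
  have hQroots : ∀ c ∈ Q.roots, ‖c‖ < 1 := by
    intro c hc
    by_contra hcon
    push Not at hcon
    have hc0 : c ≠ 0 := by
      rintro rfl
      norm_num at hcon
    have h1 : aeval c (reflect p γ) = 0 := by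
      have := (mem_roots hQ0).mp hc
      rwa [hQmap, IsRoot.def, eval_map_algebraMap] at this
    refine hroot c⁻¹ ?_ (reflect_root hγ hc0 h1)
    rw [norm_inv]
    exact inv_le_one_of_one_le₀ hcon
  have hQw : aeval (shift ℂ) Q (fun n => (w n : ℂ)) = 0 := by
    funext n
    rw [hQ, aeval_shift_reflect (natDegree_map_le.trans hγ)]
    have := congrArg (fun x : ℝ => (x : ℂ)) (hw n)
    push_cast at this
    simpa using this
  have hsplit : Q = C Q.leadingCoeff * (Q.roots.map fun c => X - C c).prod :=
    (IsAlgClosed.splits Q).eq_prod_roots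
  have h0 : aeval (shift ℂ) (Q.roots.map fun c => X - C c).prod (fun n => (w n : ℂ)) = 0 := by
    rw [hsplit, map_mul, aeval_C, Module.End.mul_apply, Module.algebraMap_end_apply] at hQw
    exact (smul_eq_zero.mp hQw).resolve_left (leadingCoeff_ne_zero.mpr hQ0)
  have hs := summable_of_roots Q.roots hQroots (fun n => (w n : ℂ)) (by simp [h0, summable_zero])
  have := hs.tendsto_atTop_zero
  simp only [Complex.norm_real] at this
  exact tendsto_zero_iff_norm_tendsto_zero.mpr this

/-- The reflected polynomials are coprime too: a common root is either inverse to a common root of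
`δ` and `μ`, or it is `0`, which the degree condition excludes. A Bézout relation in the shift then
kills `w`. -/
lemma eq_zero_of_two_recurrences {p : ℕ} {δ μ : ℝ[X]} (hδ : δ.natDegree ≤ p)
    (hμ : μ.natDegree ≤ p) (hdeg : δ.coeff p ≠ 0 ∨ μ.coeff p ≠ 0) (hcop : IsCoprime δ μ)
    {w : ℕ → ℝ} (h1 : ∀ n, ∑ i ∈ Finset.range (p + 1), δ.coeff i * w (n + (p - i)) = 0)
    (h2 : ∀ n, ∑ i ∈ Finset.range (p + 1), μ.coeff i * w (n + (p - i)) = 0) : w = 0 := by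
  have hcop' : IsCoprime (reflect p δ) (reflect p μ) := by
    rw [isCoprime_iff_aeval_ne_zero_of_isAlgClosed ℝ ℂ] at hcop ⊢
    intro c
    rcases eq_or_ne c 0 with rfl | hc
    · refine hdeg.imp ?_ ?_ <;> intro h <;>
        rwa [← coeff_zero_eq_aeval_zero', coeff_reflect, revAt_le (Nat.zero_le _), Nat.sub_zero,
          Ne, map_eq_zero]
    · exact (hcop c⁻¹).imp (fun h h' => h (reflect_root hδ hc h'))
        fun h h' => h (reflect_root hμ hc h')
  obtain ⟨u, v, huv⟩ := hcop'
  have e1 : aeval (shift ℝ) (reflect p δ) w = 0 := by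
    funext n; rw [aeval_shift_reflect hδ, h1]; rfl
  have e2 : aeval (shift ℝ) (reflect p μ) w = 0 := by
    funext n; rw [aeval_shift_reflect hμ, h2]; rfl
  have := congrArg (fun P => aeval (shift ℝ) P w) huv
  simpa [e1, e2] using this.symm

/-! ### Positive definiteness -/

lemma closed_loop_ne_zero {δ μ : ℝ[X]} (hcop : IsCoprime δ μ)
    (hre : ∀ z : ℂ, ‖z‖ ≤ 1 → 0 ≤ (aeval z δ * (starRingEnd ℂ) (aeval z μ)).re)
    (z : ℂ) (hz : ‖z‖ ≤ 1) : aeval z (δ + μ) ≠ 0 := by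
  intro h
  have hδ : aeval z δ = -aeval z μ := by
    rw [map_add] at h
    exact eq_neg_of_add_eq_zero_left h
  have h1 := hre z hz
  rw [hδ, neg_mul, Complex.mul_conj, Complex.neg_re, Complex.ofReal_re] at h1
  have h2 : aeval z μ = 0 :=
    Complex.normSq_eq_zero.mp (le_antisymm (by linarith) (Complex.normSq_nonneg _))
  rcases (isCoprime_iff_aeval_ne_zero_of_isAlgClosed ℝ ℂ δ μ).mp hcop z with h3 | h3
  · exact h3 (by rw [hδ, h2, neg_zero])
  · exact h3 h2

/-- Since the leading coefficient `γ_0` is nonzero, the recurrence can be solved from any initial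
state. -/
lemma exists_trajectory {p : ℕ} {γ : ℝ[X]} (hγ : γ.coeff 0 ≠ 0) (x : Fin p → ℝ) :
    ∃ w : ℕ → ℝ, (∀ i : Fin p, w i = x i) ∧
      ∀ n, ∑ i ∈ Finset.range (p + 1), γ.coeff i * w (n + (p - i)) = 0 := by
  let E : LinearRecurrence ℝ := ⟨p, fun i => -γ.coeff (p - i) / γ.coeff 0⟩
  refine ⟨E.mkSol x, E.mkSol_eq_init x, fun n => ?_⟩
  have h := E.is_sol_mkSol x n
  change E.mkSol x (n + p) = ∑ i : Fin p, -γ.coeff (p - i) / γ.coeff 0 * E.mkSol x (n + i) at h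
  generalize E.mkSol x = w at h
  rw [Fin.sum_univ_eq_sum_range (fun i => -γ.coeff (p - i) / γ.coeff 0 * w (n + i)),
    ← Finset.sum_range_reflect] at h
  rw [Finset.sum_range_succ', Nat.sub_zero, h, Finset.mul_sum, ← Finset.sum_add_distrib]
  refine Finset.sum_eq_zero fun i hi => ?_
  have := Finset.mem_range.mp hi
  have e1 : p - (p - 1 - i) = i + 1 := by omega
  have e2 : p - 1 - i = p - (i + 1) := by omega
  rw [e1, e2]
  field_simp
  ring

/-- A storage function for the supply `(δw)(μw)` is positive definite: along `(δ + μ) w = 0` the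
supply is `-(μw)²` and the state tends to `0`. -/
lemma storage_posDef {p : ℕ} {δ μ : ℝ[X]} (hδ : δ.natDegree ≤ p) (hμ : μ.natDegree ≤ p)
    (hdeg : δ.coeff p ≠ 0 ∨ μ.coeff p ≠ 0) (hcop : IsCoprime δ μ)
    (hroot : ∀ z : ℂ, ‖z‖ ≤ 1 → aeval z (δ + μ) ≠ 0)
    {G : Matrix (Fin p) (Fin p) ℝ} (hG : G.IsSymm)
    (hdiss : ∀ w : ℕ → ℝ,
      (∑ i : Fin p, ∑ j : Fin p, G i j * (w ((i : ℕ) + 1) * w ((j : ℕ) + 1))) -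
        (∑ i : Fin p, ∑ j : Fin p, G i j * (w i * w j)) ≤
      (∑ i ∈ Finset.range (p + 1), δ.coeff i * w (p - i)) *
        ∑ i ∈ Finset.range (p + 1), μ.coeff i * w (p - i)) : G.PosDef := by
  refine Matrix.PosDef.of_dotProduct_mulVec_pos ?_ fun x hx => ?_
  · rw [Matrix.IsHermitian, Matrix.conjTranspose_eq_transpose_of_trivial]
    exact hG
  have hγ0 : (δ + μ).coeff 0 ≠ 0 := by
    have := hroot 0 (by simp)
    rwa [← coeff_zero_eq_aeval_zero', Ne, map_eq_zero] at this
  obtain ⟨w, hwx, hw⟩ := exists_trajectory hγ0 x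
  -- `V n` is the storage at time `n`, and `m n` is the value of `μw` there.
  set V : ℕ → ℝ := fun n => ∑ i : Fin p, ∑ j : Fin p, G i j * (w (n + i) * w (n + j)) with hV
  set m : ℕ → ℝ := fun n => ∑ i ∈ Finset.range (p + 1), μ.coeff i * w (n + (p - i)) with hm
  have hδm : ∀ n, ∑ i ∈ Finset.range (p + 1), δ.coeff i * w (n + (p - i)) = -m n := by
    intro n
    have := hw n
    simp only [coeff_add, add_mul, Finset.sum_add_distrib] at this
    linarith
  have hstep : ∀ n, V (n + 1) + m n ^ 2 ≤ V n := by
    intro n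
    have h := hdiss fun k => w (n + k)
    rw [hδm n] at h
    have e : V (n + 1) =
        ∑ i : Fin p, ∑ j : Fin p, G i j * (w (n + ((i : ℕ) + 1)) * w (n + ((j : ℕ) + 1))) := by
      simp only [hV]
      refine Finset.sum_congr rfl fun i _ => Finset.sum_congr rfl fun j _ => ?_
      congr 3 <;> omega
    rw [e]
    simp only [hV]
    change _ ≤ -m n * m n at h
    linarith
  have hanti : Antitone V := antitone_nat_of_succ_le fun n => by
    linarith [hstep n, sq_nonneg (m n)]
  have hlim : Filter.Tendsto V Filter.atTop (nhds 0) := by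
    have hw0 := tendsto_zero_of_recurrence (natDegree_add_le_of_degree_le hδ hμ) hroot hw
    have hwi : ∀ i : ℕ, Filter.Tendsto (fun n => w (n + i)) Filter.atTop (nhds 0) := fun i =>
      (Filter.tendsto_add_atTop_iff_nat i).mpr hw0
    have : Filter.Tendsto V Filter.atTop
        (nhds (∑ i : Fin p, ∑ j : Fin p, G i j * (0 * 0))) :=
      tendsto_finsetSum _ fun i _ => tendsto_finsetSum _ fun j _ =>
        ((hwi i).mul (hwi j)).const_mul _
    simpa using this
  have hVnn : ∀ n, 0 ≤ V n := fun n => hanti.le_of_tendsto hlim n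
  have hV0 : star x ⬝ᵥ G *ᵥ x = V 0 := by
    simp only [hV, dotProduct, mulVec, Finset.mul_sum, Nat.zero_add, hwx, star_trivial]
    refine Finset.sum_congr rfl fun i _ => Finset.sum_congr rfl fun j _ => ?_
    ring
  rw [hV0]
  refine lt_of_le_of_ne (hVnn 0) fun h0 => hx ?_
  have hVz : ∀ n, V n = 0 := fun n =>
    le_antisymm ((hanti (Nat.zero_le n)).trans h0.symm.le) (hVnn n)
  have hmz : ∀ n, m n = 0 := fun n => by
    have := hstep n
    rw [hVz, hVz] at this
    exact pow_eq_zero_iff two_ne_zero |>.mp (le_antisymm (by linarith) (sq_nonneg _))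
  have hwz : w = 0 := eq_zero_of_two_recurrences hδ hμ hdeg hcop
    (fun n => by rw [hδm, hmz, neg_zero]) hmz
  funext i
  rw [← hwx i, hwz]
  rfl

lemma dotProduct_sum_expand {N : ℕ} (p : ℕ) (M : Matrix (Fin N) (Fin N) ℝ) (q r : ℕ → ℝ)
    (w : ℕ → Fin N → ℝ) :
    (∑ i ∈ Finset.range (p + 1), q i • w (p - i)) ⬝ᵥ
      M *ᵥ (∑ j ∈ Finset.range (p + 1), r j • w (p - j)) =
    ∑ i ∈ Finset.range (p + 1), ∑ j ∈ Finset.range (p + 1),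
      q i * r j * (w (p - i) ⬝ᵥ M *ᵥ w (p - j)) := by
  rw [sum_dotProduct]
  refine Finset.sum_congr rfl fun i _ => ?_
  rw [Matrix.mulVec_sum, dotProduct_sum]
  refine Finset.sum_congr rfl fun j _ => ?_
  rw [Matrix.mulVec_smul, smul_dotProduct, dotProduct_smul, smul_eq_mul, smul_eq_mul, mul_assoc]

/-- **Dahlquist's G-stability lemma.**
Let `δ`, `μ` be real polynomials of degree at most `p` (at least one of degree exactly `p`)
with no common divisor (i.e. coprime), such that `μ(ζ) ≠ 0` and `Re (δ(ζ)/μ(ζ)) > 0` for all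
complex `ζ` with `|ζ| < 1`.  Then there is a symmetric positive definite matrix
`G = (g i j) ∈ ℝ^{p×p}` such that for every `N ≥ 1`, every inner product on `ℝ^N`
(given by a symmetric positive definite matrix `M`, `⟨v, w⟩ = vᵀ M w`), and all vectors
`w 0, …, w p ∈ ℝ^N`,
`⟨∑ i, δ_i w_{p-i}, ∑ i, μ_i w_{p-i}⟩ ≥ ∑ i j, g i j ⟨w i, w j⟩ - ∑ i j, g i j ⟨w (i-1), w (j-1)⟩`. -/
theorem dahlquist_G_stability
    (p : ℕ) (hp : 1 ≤ p) (δ μ : Polynomial ℝ)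
    (hδdeg : δ.degree ≤ (p : ℕ)) (hμdeg : μ.degree ≤ (p : ℕ))
    (hdeg : δ.degree = (p : ℕ) ∨ μ.degree = (p : ℕ))
    (hcop : IsCoprime δ μ)
    (hpos : ∀ z : ℂ, ‖z‖ < 1 →
      Polynomial.aeval z μ ≠ 0 ∧ 0 < (Polynomial.aeval z δ / Polynomial.aeval z μ).re) :
    ∃ G : Matrix (Fin p) (Fin p) ℝ, G.IsSymm ∧ G.PosDef ∧
      ∀ (N : ℕ), 1 ≤ N → ∀ (M : Matrix (Fin N) (Fin N) ℝ), M.IsSymm → M.PosDef →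
        ∀ w : ℕ → (Fin N → ℝ),
          (∑ i ∈ Finset.range (p + 1), δ.coeff i • w (p - i)) ⬝ᵥ
              M.mulVec (∑ i ∈ Finset.range (p + 1), μ.coeff i • w (p - i)) ≥
            (∑ i : Fin p, ∑ j : Fin p, G i j *
                (w ((i : ℕ) + 1) ⬝ᵥ M.mulVec (w ((j : ℕ) + 1)))) -
            (∑ i : Fin p, ∑ j : Fin p, G i j *
                (w (i : ℕ) ⬝ᵥ M.mulVec (w (j : ℕ)))) := by
  have hδ : δ.natDegree ≤ p := natDegree_le_of_degree_le hδdeg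
  have hμ : μ.natDegree ≤ p := natDegree_le_of_degree_le hμdeg
  have hdeg' : δ.coeff p ≠ 0 ∨ μ.coeff p ≠ 0 :=
    hdeg.imp coeff_ne_zero_of_eq_degree coeff_ne_zero_of_eq_degree
  have hre : ∀ z : ℂ, ‖z‖ ≤ 1 → 0 ≤ (aeval z δ * (starRingEnd ℂ) (aeval z μ)).re :=
    fun z hz => re_mul_conj_nonneg δ μ hpos hz
  obtain ⟨ι, _, a, G, hG, hid⟩ := storage_identity hδ hμ hre
  refine ⟨G, hG, ?_, fun N _ M hM hMpos w => ?_⟩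
  · refine storage_posDef hδ hμ hdeg' hcop (closed_loop_ne_zero hcop hre) hG fun w => ?_
    have h := hid (fun i j => w i * w j) fun i j => mul_comm _ _
    have prod : ∀ q r : ℝ[X], ∑ i ∈ Finset.range (p + 1), ∑ j ∈ Finset.range (p + 1),
        q.coeff i * r.coeff j * (w (p - i) * w (p - j)) =
        (∑ i ∈ Finset.range (p + 1), q.coeff i * w (p - i)) *
          ∑ i ∈ Finset.range (p + 1), r.coeff i * w (p - i) := fun q r => by
      rw [Finset.sum_mul_sum]
      exact Finset.sum_congr rfl fun i _ => Finset.sum_congr rfl fun j _ => by ring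
    simp only [prod] at h
    rw [h]
    exact le_add_of_nonneg_right (Finset.sum_nonneg fun k _ => mul_self_nonneg _)
  · have h := hid (fun i j => w i ⬝ᵥ M *ᵥ w j) fun i j => by
      rw [dotProduct_mulVec, ← mulVec_transpose, hM.eq, dotProduct_comm]
    simp only [← dotProduct_sum_expand] at h
    rw [h, ge_iff_le]
    refine le_add_of_nonneg_right (Finset.sum_nonneg fun k _ => ?_)
    simpa using hMpos.posSemidef.dotProduct_mulVec_nonneg
      (∑ i ∈ Finset.range (p + 1), (a k).coeff i • w (p - i))
end

section
/- For every integer p with 1 ≤ p ≤ 5 there exists a real number η with 0 ≤ η < 1 such that Re(δ(ζ)/(1 − ηζ)) > 0 for every complex ζ with |ζ| < 1, where δ(ζ) = Σ_{ℓ=1}^p (1/ℓ)(1−ζ)^ℓ. -/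
/-!
The quotient `f(ζ) = δ(ζ)/(1 - ηζ)` is holomorphic near the closed unit disc because `η < 1`.
The maximum modulus principle applied to `exp (-f)`, whose modulus is `exp (-Re f)`, shows that
`Re f ≥ 0` on the unit circle together with `Re f(0) > 0` forces `Re f > 0` inside the disc
(`re_div_pos_of_circle`). On the circle the sign of `Re f` is that of
`Re (δ(ζ) (1 - η conj ζ))`, which with `x = Re ζ` is a polynomial in `x` of the form
`(1 - x) q(x)` with `deg q ≤ p - 1`. The choice `η = 0, 0, 1/4, 1/2, 9/10` for `p = 1, ..., 5`
makes `q` nonnegative on `[-1, 1]`.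
-/

/-- Boundary criterion: positivity of the real part of `D(ζ)/(1 - ηζ)` in the open unit disc
follows from its nonnegativity on the circle, where the denominator has been cleared by
multiplying with `|1 - ηζ|² > 0`. -/
lemma re_div_pos_of_circle (D : ℂ → ℂ) (hD : Differentiable ℂ D) (η : ℝ) (h0 : 0 ≤ η)
    (h1 : η < 1) (hD0 : 0 < (D 0).re)
    (hb : ∀ x y : ℝ, x ^ 2 + y ^ 2 = 1 →
      0 ≤ (D ⟨x, y⟩).re * (1 - η * x) - (D ⟨x, y⟩).im * (η * y)) :
    ∀ z : ℂ, ‖z‖ < 1 → 0 < (D z / (1 - (η : ℂ) * z)).re := by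
  have hne : ∀ z : ℂ, ‖z‖ ≤ 1 → 1 - (η : ℂ) * z ≠ 0 := by
    intro z hz h
    have h2 : ‖(η : ℂ) * z‖ = 1 := by
      rw [← sub_eq_zero.mp h]; simp
    rw [norm_mul, Complex.norm_real, Real.norm_of_nonneg h0] at h2
    nlinarith [norm_nonneg z]
  set f : ℂ → ℂ := fun z => D z / (1 - (η : ℂ) * z) with hf
  have hcl : closure (Metric.ball (0 : ℂ) 1) = Metric.closedBall 0 1 :=
    closure_ball _ one_ne_zero
  have hd : DiffContOnCl ℂ (fun z => Complex.exp (-f z)) (Metric.ball 0 1) := by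
    apply DifferentiableOn.diffContOnCl
    intro z hz
    rw [hcl, mem_closedBall_zero_iff] at hz
    apply DifferentiableAt.differentiableWithinAt
    exact ((hD z).fun_div (by fun_prop) (hne z hz)).neg.cexp
  have hle : ∀ z : ℂ, ‖z‖ ≤ 1 → ‖Complex.exp (-f z)‖ ≤ 1 := by
    intro z hz
    apply Complex.norm_le_of_forall_mem_frontier_norm_le Metric.isBounded_ball hd
    · intro w hw
      rw [frontier_ball _ one_ne_zero, mem_sphere_zero_iff_norm] at hw
      rw [Complex.norm_exp, Real.exp_le_one_iff, Complex.neg_re, neg_nonpos]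
      have hxy : w.re ^ 2 + w.im ^ 2 = 1 := by
        have := Complex.sq_norm w
        rw [hw, Complex.normSq_apply] at this
        linarith
      have hbw := hb w.re w.im hxy
      have hN : 0 < Complex.normSq (1 - (η : ℂ) * w) := Complex.normSq_pos.mpr (hne w hw.le)
      have hre : (f w).re = ((D w).re * (1 - η * w.re) - (D w).im * (η * w.im))
          / Complex.normSq (1 - (η : ℂ) * w) := by
        simp only [hf, Complex.div_re]
        simp
        ring
      rw [hre]
      exact div_nonneg hbw hN.le
    · rw [hcl, mem_closedBall_zero_iff]; exact hz
  intro z hz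
  have hzero : (f z).re ≠ 0 := by
    intro h
    -- A zero of `Re f` inside would be an interior maximum of `|exp (-f)|`, hence `Re f(0) = 0`.
    have hmax : IsMaxOn (norm ∘ fun z => Complex.exp (-f z)) (Metric.ball 0 1) z := by
      intro w hw
      rw [mem_ball_zero_iff] at hw
      have := hle w hw.le
      simpa [Complex.norm_exp, h] using this
    have := Complex.norm_eqOn_of_isPreconnected_of_isMaxOn
      (convex_ball (0 : ℂ) 1).isPreconnected Metric.isOpen_ball hd.differentiableOn
      (mem_ball_zero_iff.mpr hz) hmax (Metric.mem_ball_self one_pos)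
    have h3 : (f 0).re = 0 := by
      simpa [Complex.norm_exp, h] using this
    simp [hf] at h3
    linarith
  have hnn := hle z hz.le
  rw [Complex.norm_exp, Real.exp_le_one_iff, Complex.neg_re, neg_nonpos] at hnn
  exact lt_of_le_of_ne hnn (Ne.symm hzero)

/-- **Nevanlinna–Odeh multiplier lemma.**
For every `1 ≤ p ≤ 5` there is `η ∈ [0,1)` such that `Re (δ(ζ)/(1 - ηζ)) > 0` for all
complex `ζ` with `|ζ| < 1`, where `δ(ζ) = ∑_{ℓ=1}^p (1/ℓ)(1-ζ)^ℓ` is the `p`-step BDF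
generating polynomial. -/
theorem nevanlinna_odeh (p : ℕ) (hp1 : 1 ≤ p) (hp5 : p ≤ 5) :
    ∃ η : ℝ, 0 ≤ η ∧ η < 1 ∧ ∀ z : ℂ, ‖z‖ < 1 →
      0 < ((∑ ℓ ∈ Finset.Icc 1 p, (ℓ : ℂ)⁻¹ * (1 - z) ^ ℓ) / (1 - (η : ℂ) * z)).re := by
  -- It suffices to exhibit `η` and the cofactor `q` of `1 - x` on the circle.
  suffices h : ∃ (η : ℝ) (q : ℝ → ℝ), 0 ≤ η ∧ η < 1 ∧ (∀ x, -1 ≤ x → x ≤ 1 → 0 ≤ q x) ∧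
      ∀ x y : ℝ, y ^ 2 = 1 - x ^ 2 →
        (∑ ℓ ∈ Finset.Icc 1 p, (ℓ : ℂ)⁻¹ * (1 - (⟨x, y⟩ : ℂ)) ^ ℓ).re * (1 - η * x)
          - (∑ ℓ ∈ Finset.Icc 1 p, (ℓ : ℂ)⁻¹ * (1 - (⟨x, y⟩ : ℂ)) ^ ℓ).im * (η * y)
          = (1 - x) * q x by
    obtain ⟨η, q, h0, h1, hq, hid⟩ := h
    refine ⟨η, h0, h1, re_div_pos_of_circle
      (fun z => ∑ ℓ ∈ Finset.Icc 1 p, (ℓ : ℂ)⁻¹ * (1 - z) ^ ℓ) (by fun_prop) η h0 h1 ?_ ?_⟩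
    · interval_cases p <;> norm_num [Finset.sum_Icc_succ_top]
    · intro x y hxy
      have hx1 : x ≤ 1 := by nlinarith [sq_nonneg y]
      have hx2 : -1 ≤ x := by nlinarith [sq_nonneg y]
      rw [hid x y (by linarith)]
      exact mul_nonneg (by linarith) (hq x hx2 hx1)
  have hinv (n : ℕ) : ((n : ℂ)⁻¹) = (((n : ℝ)⁻¹ : ℝ) : ℂ) := by push_cast; rfl
  simp only [hinv, Complex.re_sum, Complex.im_sum, Complex.re_ofReal_mul, Complex.im_ofReal_mul]
  have e1 (x y : ℝ) : (1 - (⟨x, y⟩ : ℂ)) = ⟨1 - x, -y⟩ := by apply Complex.ext <;> simp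
  simp only [e1]
  interval_cases p
  · refine ⟨0, fun _ => 1, by norm_num, by norm_num, fun _ _ _ => by norm_num, ?_⟩
    intro x y hy
    simp
  · refine ⟨0, fun x => 1 - x, by norm_num, by norm_num, fun _ _ _ => by linarith, ?_⟩
    intro x y hy
    simp [Finset.sum_Icc_succ_top, pow_succ]
    linear_combination (-1/2) * hy
  · refine ⟨1/4, fun x => 1 - 11/6 * x + 4/3 * x ^ 2, by norm_num, by norm_num,
      fun x _ _ => by nlinarith [sq_nonneg (x - 11/16)], ?_⟩
    intro x y hy
    have hy4 : y ^ 4 = (1 - x ^ 2) ^ 2 := by rw [← hy]; ring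
    simp [Finset.sum_Icc_succ_top, pow_succ]
    ring_nf
    simp only [hy, hy4]
    ring
  · refine ⟨1/2, fun x => 2/3 - 3/2 * x + 23/6 * x ^ 2 - 2 * x ^ 3, by norm_num, by norm_num,
      fun x _ hx => ?_, ?_⟩
    · have := mul_nonneg (sub_nonneg.mpr hx) (sq_nonneg x)
      nlinarith [sq_nonneg (x - 9/22)]
    intro x y hy
    have hy4 : y ^ 4 = (1 - x ^ 2) ^ 2 := by rw [← hy]; ring
    simp [Finset.sum_Icc_succ_top, pow_succ]
    ring_nf
    simp only [hy, hy4]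
    ring
  · refine ⟨9/10, fun x => 16/75 + 31/30 * x + 839/150 * x ^ 2 - 206/25 * x ^ 3 + 16/5 * x ^ 4,
      by norm_num, by norm_num, fun x hx1 hx => ?_, ?_⟩
    · nlinarith [sq_nonneg (x * (x - 103/80)), sq_nonneg (x + 1/10), sq_nonneg x]
    intro x y hy
    have hy4 : y ^ 4 = (1 - x ^ 2) ^ 2 := by rw [← hy]; ring
    have hy6 : y ^ 6 = (1 - x ^ 2) ^ 3 := by rw [← hy]; ring
    simp [Finset.sum_Icc_succ_top, pow_succ]
    ring_nf
    simp only [hy, hy4, hy6]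
    ring
end

section
/- For every integer p with 1 ≤ p ≤ 5 there exist a real number η with 0 ≤ η < 1 and a symmetric positive definite matrix G = (g_{ij}) ∈ ℝ^{p×p} such that for every N ≥ 1, every inner product ⟨·,·⟩ on ℝ^N, and all vectors w_0, …, w_p ∈ ℝ^N, one has ⟨Σ_{i=0}^p δ_i w_{p−i}, w_p − η w_{p−1}⟩ ≥ Σ_{i,j=1}^p g_{ij} ⟨w_i, w_j⟩ − Σ_{i,j=1}^p g_{ij} ⟨w_{i−1}, w_{j−1}⟩, where δ_0, …, δ_p are the p-step BDF coefficients. -/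
/-!
Dahlquist's lemma reduces the inequality to positivity of the symbol `Re (δ(ζ) (1 - η ζ̄))` on the
unit circle. This symbol has a double zero at `ζ = 1`, and for the values of `η` used below the
quotient by `|1 - ζ|²` is nonnegative (positive for `p ≥ 3`). For each `p` the proof exhibits
rational certificates of this fact: an explicit `G` such that

  `(∑ δ_i x_{p-i}) (x_p - η x_{p-1}) - ∑ g_ij x_{i+1} x_{j+1} + ∑ g_ij x_i x_j`

is a positive combination of squares of linear forms in the differences `x_{i+1} - x_i`
(`scalar_one`, …, `scalar_five`), and a factorization `G = Lᵀ D L` with `L` upper triangular and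
`D` a positive diagonal matrix (`posDef_of_factor`).

The multipliers `η = 0, 0, 1/5, 1/2, 9/10` are not the smallest admissible ones for `p ≥ 3`; the
slack leaves room for rational certificates with moderate denominators.

It suffices to know the inequality for real sequences: writing `M = Bᵀ B`, the inner product
`vᵀ M w` is the sum over `k` of the products `(B v)_k (B w)_k`, so the inequality for vectors is a
sum of scalar ones (`vector_of_scalar`).
-/

open Matrix

/-- The generating polynomial `δ(ζ) = ∑_{ℓ=1}^p (1/ℓ)(1-ζ)^ℓ` of the `p`-step BDF method;
the BDF coefficients `δ_j` are its coefficients. -/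
noncomputable def bdfPoly (p : ℕ) : Polynomial ℝ :=
  ∑ ℓ ∈ Finset.Icc 1 p, Polynomial.C ((ℓ : ℝ)⁻¹) * (1 - Polynomial.X) ^ ℓ

/-- The energy inequality for a real sequence, i.e. for `N = 1` and the standard inner product. -/
def ScalarEnergyIneq (p : ℕ) (η : ℝ) (G : Matrix (Fin p) (Fin p) ℝ) : Prop :=
  ∀ x : ℕ → ℝ,
    (∑ i : Fin p, ∑ j : Fin p, G i j * (x ((i : ℕ) + 1) * x ((j : ℕ) + 1))) -
        (∑ i : Fin p, ∑ j : Fin p, G i j * (x (i : ℕ) * x (j : ℕ))) ≤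
      (∑ i ∈ Finset.range (p + 1), (bdfPoly p).coeff i * x (p - i)) * (x p - η * x (p - 1))

open scoped MatrixOrder Matrix.Norms.L2Operator in
lemma exists_eq_transpose_mul_self {N : ℕ} {M : Matrix (Fin N) (Fin N) ℝ} (hM : M.PosDef) :
    ∃ B : Matrix (Fin N) (Fin N) ℝ, M = Bᵀ * B := by
  obtain ⟨B, hB⟩ := CStarAlgebra.nonneg_iff_eq_star_mul_self.mp hM.posSemidef.nonneg
  exact ⟨B, by simpa [star_eq_conjTranspose] using hB⟩

/-- The scalar inequality implies the inequality for any inner product on `ℝ^N`, by summing it over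
the coordinates of `B w` where `M = Bᵀ B`. -/
lemma vector_of_scalar {p : ℕ} {η : ℝ} {G : Matrix (Fin p) (Fin p) ℝ}
    (h : ScalarEnergyIneq p η G) {N : ℕ} {M : Matrix (Fin N) (Fin N) ℝ} (hM : M.PosDef)
    (w : ℕ → (Fin N → ℝ)) :
    (∑ i ∈ Finset.range (p + 1), (bdfPoly p).coeff i • w (p - i)) ⬝ᵥ
        M.mulVec (w p - η • w (p - 1)) ≥
      (∑ i : Fin p, ∑ j : Fin p, G i j *
          (w ((i : ℕ) + 1) ⬝ᵥ M.mulVec (w ((j : ℕ) + 1)))) -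
      (∑ i : Fin p, ∑ j : Fin p, G i j *
          (w (i : ℕ) ⬝ᵥ M.mulVec (w (j : ℕ)))) := by
  obtain ⟨B, rfl⟩ := exists_eq_transpose_mul_self hM
  have key (v u : Fin N → ℝ) :
      v ⬝ᵥ (Bᵀ * B).mulVec u = ∑ k, (B *ᵥ v) k * (B *ᵥ u) k := by
    rw [← mulVec_mulVec, dotProduct_mulVec, vecMul_transpose]
    rfl
  have hsum := Finset.sum_le_sum fun k (_ : k ∈ Finset.univ) => h fun n => (B *ᵥ w n) k
  simp only [Finset.sum_sub_distrib] at hsum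
  have swap (a : Fin p → Fin N → ℝ) :
      ∑ k, ∑ i, ∑ j, G i j * (a i k * a j k) = ∑ i, ∑ j, G i j * ∑ k, a i k * a j k := by
    rw [Finset.sum_comm]
    refine Finset.sum_congr rfl fun i _ => ?_
    rw [Finset.sum_comm]
    exact Finset.sum_congr rfl fun j _ => (Finset.mul_sum _ _ _).symm
  rw [swap fun i k => (B *ᵥ w ((i : ℕ) + 1)) k, swap fun i k => (B *ᵥ w (i : ℕ)) k] at hsum
  simp only [key]
  refine hsum.trans_eq (Finset.sum_congr rfl fun k _ => ?_)
  simp [mulVec_sub, mulVec_smul, mulVec_sum, Finset.sum_apply]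

lemma posDef_of_factor {n : ℕ} {G : Matrix (Fin n) (Fin n) ℝ} (L : Matrix (Fin n) (Fin n) ℝ)
    (d : Fin n → ℝ) (hd : ∀ i, 0 < d i) (hL : L.IsUpperTriangular) (hL' : ∀ i, L i i ≠ 0)
    (h : G = Lᵀ * diagonal d * L) : G.PosDef := by
  have hdet : IsUnit L := by
    rw [isUnit_iff_isUnit_det, det_of_isUpperTriangular hL, isUnit_iff_ne_zero]
    exact Finset.prod_ne_zero_iff.mpr fun i _ => hL' i
  rw [h, ← conjTranspose_eq_transpose_of_trivial]
  exact (PosDef.diagonal hd).conjTranspose_mul_mul_same (mulVec_injective_iff_isUnit.mpr hdet)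

lemma coeff_one_sub_X_pow (n k : ℕ) :
    ((1 - Polynomial.X : Polynomial ℝ) ^ n).coeff k = (-1) ^ k * n.choose k := by
  have : (1 - Polynomial.X : Polynomial ℝ) ^ n
      = ((1 + Polynomial.X) ^ n).comp (Polynomial.C (-1) * Polynomial.X) := by
    simp [sub_eq_add_neg]
  rw [this, Polynomial.comp_C_mul_X_coeff, Polynomial.coeff_one_add_X_pow, mul_comm]

lemma coeff_bdfPoly (p k : ℕ) :
    (bdfPoly p).coeff k = ∑ ℓ ∈ Finset.Icc 1 p, (ℓ : ℝ)⁻¹ * ((-1) ^ k * ℓ.choose k) := by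
  simp [bdfPoly, Polynomial.finsetSum_coeff, coeff_one_sub_X_pow]

/-!
Each sum of squares in `scalar_*` is the `LDLᵀ` decomposition of a positive semidefinite matrix `R`
in the differences `d i = x (i + 1) - x i`. The symbol fixes the sums of `R` along its diagonals;
among all such `R`, a rational one close to the maximizer of `det R` is taken when `p ≥ 3`. Then `R`
determines `G`, and the matrices `L` in `posDef_*` come from the `LDLᵀ` decomposition of `G`, with
rows rescaled to integers.
-/

/-- The matrix `G` for the one-step method with `η = 0`. -/
noncomputable def energyMatrix1 : Matrix (Fin 1) (Fin 1) ℝ :=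
  (1 / 2 : ℝ) • !![1]

lemma scalar_one : ScalarEnergyIneq 1 0 energyMatrix1 := by
  intro x
  rw [← sub_nonneg]
  let d : ℕ → ℝ := fun i => x (i + 1) - x i
  refine le_of_le_of_eq (b := (1 / 2 : ℝ) * d 0 ^ 2) (by positivity) ?_
  simp [d, energyMatrix1, Fin.sum_univ_succ, Finset.sum_range_succ, coeff_bdfPoly,
    Finset.sum_Icc_succ_top, Nat.choose]
  ring

lemma posDef_one : energyMatrix1.PosDef := by
  refine posDef_of_factor
    !![1]
    (fun i => 1 / 2 * ![1] i) ?_ ?_ ?_ ?_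
  · intro i; fin_cases i <;> norm_num
  · intro i j hij; fin_cases i <;> fin_cases j <;> simp at hij ⊢
  · intro i; fin_cases i <;> norm_num
  · ext i j
    fin_cases i <;> fin_cases j <;>
      norm_num [energyMatrix1, Matrix.mul_apply, diagonal, Fin.sum_univ_succ]

/-- The matrix `G` for the two-step method with `η = 0`. -/
noncomputable def energyMatrix2 : Matrix (Fin 2) (Fin 2) ℝ :=
  (1 / 4 : ℝ) • !![1, -2;
    -2, 5]

lemma scalar_two : ScalarEnergyIneq 2 0 energyMatrix2 := by
  intro x
  rw [← sub_nonneg]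
  let d : ℕ → ℝ := fun i => x (i + 1) - x i
  refine le_of_le_of_eq (b := (1 / 4 : ℝ) * (
      (d 0 - d 1) ^ 2)) (by positivity) ?_
  simp [d, energyMatrix2, Fin.sum_univ_succ, Finset.sum_range_succ, coeff_bdfPoly,
    Finset.sum_Icc_succ_top, Nat.choose]
  ring

lemma posDef_two : energyMatrix2.PosDef := by
  refine posDef_of_factor
    !![1, -2;
    0, 1]
    (fun i => 1 / 4 * ![1, 1] i) ?_ ?_ ?_ ?_
  · intro i; fin_cases i <;> norm_num
  · intro i j hij; fin_cases i <;> fin_cases j <;> simp at hij ⊢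
  · intro i; fin_cases i <;> norm_num
  · ext i j
    fin_cases i <;> fin_cases j <;>
      norm_num [energyMatrix2, Matrix.mul_apply, diagonal, Fin.sum_univ_succ]

/-- The matrix `G` for the three-step method with `η = 1/5`. -/
noncomputable def energyMatrix3 : Matrix (Fin 3) (Fin 3) ℝ :=
  (1 / 60 : ℝ) • !![13, -26, 21;
    -26, 72, -74;
    21, -74, 97]

lemma scalar_three : ScalarEnergyIneq 3 (1 / 5) energyMatrix3 := by
  intro x
  rw [← sub_nonneg]
  let d : ℕ → ℝ := fun i => x (i + 1) - x i
  refine le_of_le_of_eq (b := (1 / 60 : ℝ) * (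
      1 / 13 * (13 * d 0 - 13 * d 1 + 10 * d 2) ^ 2
      + 1 / 7 * (7 * d 1 - 4 * d 2) ^ 2
      + 275 / 91 * (d 2) ^ 2)) (by positivity) ?_
  simp [d, energyMatrix3, Fin.sum_univ_succ, Finset.sum_range_succ, coeff_bdfPoly,
    Finset.sum_Icc_succ_top, Nat.choose]
  ring

lemma posDef_three : energyMatrix3.PosDef := by
  refine posDef_of_factor
    !![13, -26, 21;
    0, 5, -8;
    0, 0, 1]
    (fun i => 1 / 60 * ![1 / 13, 4 / 5, 772 / 65] i) ?_ ?_ ?_ ?_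
  · intro i; fin_cases i <;> norm_num
  · intro i j hij; fin_cases i <;> fin_cases j <;> simp at hij ⊢
  · intro i; fin_cases i <;> norm_num
  · ext i j
    fin_cases i <;> fin_cases j <;>
      norm_num [energyMatrix3, Matrix.mul_apply, diagonal, Fin.sum_univ_succ]

/-- The matrix `G` for the four-step method with `η = 1/2`. -/
noncomputable def energyMatrix4 : Matrix (Fin 4) (Fin 4) ℝ :=
  (1 / 48 : ℝ) • !![12, -23, 23, -15;
    -23, 65, -79, 50;
    23, -79, 131, -98;
    -15, 50, -98, 88]

lemma scalar_four : ScalarEnergyIneq 4 (1 / 2) energyMatrix4 := by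
  intro x
  rw [← sub_nonneg]
  let d : ℕ → ℝ := fun i => x (i + 1) - x i
  refine le_of_le_of_eq (b := (1 / 48 : ℝ) * (
      1 / 12 * (12 * d 0 - 11 * d 1 + 12 * d 2 - 6 * d 3) ^ 2
      + 1 / 1284 * (107 * d 1 - 36 * d 2 + 66 * d 3) ^ 2
      + 1 / 68587 * (641 * d 2 - 337 * d 3) ^ 2
      + 2533 / 641 * (d 3) ^ 2)) (by positivity) ?_
  simp [d, energyMatrix4, Fin.sum_univ_succ, Finset.sum_range_succ, coeff_bdfPoly,
    Finset.sum_Icc_succ_top, Nat.choose]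
  ring

lemma posDef_four : energyMatrix4.PosDef := by
  refine posDef_of_factor
    !![12, -23, 23, -15;
    0, 251, -419, 255;
    0, 0, 3593, -4239;
    0, 0, 0, 1]
    (fun i => 1 / 48 * ![1 / 12, 1 / 3012, 2 / 901843, 28067 / 3593] i) ?_ ?_ ?_ ?_
  · intro i; fin_cases i <;> norm_num
  · intro i j hij; fin_cases i <;> fin_cases j <;> simp at hij ⊢
  · intro i; fin_cases i <;> norm_num
  · ext i j
    fin_cases i <;> fin_cases j <;>
      norm_num [energyMatrix4, Matrix.mul_apply, diagonal, Fin.sum_univ_succ]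

/-- The matrix `G` for the five-step method with `η = 9/10`. -/
noncomputable def energyMatrix5 : Matrix (Fin 5) (Fin 5) ℝ :=
  (1 / 1200 : ℝ) • !![361, -641, 684, -713, 321;
    -641, 1821, -2356, 2400, -1287;
    684, -2356, 4070, -4577, 2316;
    -713, 2400, -4577, 6319, -3592;
    321, -1287, 2316, -3592, 2379]

lemma scalar_five : ScalarEnergyIneq 5 (9 / 10) energyMatrix5 := by
  intro x
  rw [← sub_nonneg]
  let d : ℕ → ℝ := fun i => x (i + 1) - x i
  refine le_of_le_of_eq (b := (1 / 1200 : ℝ) * (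
      1 / 361 * (361 * d 0 - 280 * d 1 + 404 * d 2 - 309 * d 3 + 120 * d 4) ^ 2
      + 1 / 41940619 * (116179 * d 1 - 64492 * d 2 + 97951 * d 3 - 77949 * d 4) ^ 2
      + 2 / 1179071974787 * (10148753 * d 2 + 257054 * d 3 + 8704384 * d 4) ^ 2
      + 3 / 421068933629 * (2530873 * d 3 + 53615 * d 4) ^ 2
      + 7363955643 / 154383253 * (d 4) ^ 2)) (by positivity) ?_
  simp [d, energyMatrix5, Fin.sum_univ_succ, Finset.sum_range_succ, coeff_bdfPoly,
    Finset.sum_Icc_succ_top, Nat.choose]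
  ring

lemma posDef_five : energyMatrix5.PosDef := by
  refine posDef_of_factor
    !![361, -641, 684, -713, 321;
    0, 246500, -412072, 409367, -258846;
    0, 0, 53355414, -81985079, 31376052;
    0, 0, 0, 104929032827, -105097642422;
    0, 0, 0, 0, 1]
    (fun i => 1 / 1200 * ![1 / 361, 1 / 88986500, 1 / 3288027387750, 1 / 11197063974208350756,
      5745798535896 / 104929032827] i) ?_ ?_ ?_ ?_
  · intro i; fin_cases i <;> norm_num
  · intro i j hij; fin_cases i <;> fin_cases j <;> simp at hij ⊢
  · intro i; fin_cases i <;> norm_num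
  · ext i j
    fin_cases i <;> fin_cases j <;>
      norm_num [energyMatrix5, Matrix.mul_apply, diagonal, Fin.sum_univ_succ]

/-- **Dahlquist's lemma combined with the Nevanlinna–Odeh multiplier.**
For every `1 ≤ p ≤ 5` there exist `η ∈ [0,1)` and a symmetric positive definite matrix
`G ∈ ℝ^{p×p}` such that for every `N ≥ 1`, every inner product on `ℝ^N` (given by a
symmetric positive definite matrix `M`, `⟨v, w⟩ = vᵀ M w`), and all `w 0, …, w p ∈ ℝ^N`,
`⟨∑ i, δ_i w_{p-i}, w p - η w_{p-1}⟩ ≥ ∑ g i j ⟨w i, w j⟩ - ∑ g i j ⟨w (i-1), w (j-1)⟩`,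
where `δ_0, …, δ_p` are the `p`-step BDF coefficients. -/
theorem dahlquist_nevanlinna_odeh (p : ℕ) (hp1 : 1 ≤ p) (hp5 : p ≤ 5) :
    ∃ (η : ℝ) (G : Matrix (Fin p) (Fin p) ℝ), 0 ≤ η ∧ η < 1 ∧ G.IsSymm ∧ G.PosDef ∧
      ∀ (N : ℕ), 1 ≤ N → ∀ (M : Matrix (Fin N) (Fin N) ℝ), M.IsSymm → M.PosDef →
        ∀ w : ℕ → (Fin N → ℝ),
          (∑ i ∈ Finset.range (p + 1), (bdfPoly p).coeff i • w (p - i)) ⬝ᵥ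
              M.mulVec (w p - η • w (p - 1)) ≥
            (∑ i : Fin p, ∑ j : Fin p, G i j *
                (w ((i : ℕ) + 1) ⬝ᵥ M.mulVec (w ((j : ℕ) + 1)))) -
            (∑ i : Fin p, ∑ j : Fin p, G i j *
                (w (i : ℕ) ⬝ᵥ M.mulVec (w (j : ℕ)))) := by
  suffices h : ∃ (η : ℝ) (G : Matrix (Fin p) (Fin p) ℝ),
      0 ≤ η ∧ η < 1 ∧ G.PosDef ∧ ScalarEnergyIneq p η G by
    obtain ⟨η, G, h0, h1, hG, hs⟩ := h
    refine ⟨η, G, h0, h1, ?_, hG, fun N _ M _ hM w => vector_of_scalar hs hM w⟩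
    simpa [IsSymm, IsHermitian, conjTranspose_eq_transpose_of_trivial] using hG.isHermitian
  interval_cases p
  · exact ⟨0, energyMatrix1, by norm_num, by norm_num, posDef_one, scalar_one⟩
  · exact ⟨0, energyMatrix2, by norm_num, by norm_num, posDef_two, scalar_two⟩
  · exact ⟨1 / 5, energyMatrix3, by norm_num, by norm_num, posDef_three, scalar_three⟩
  · exact ⟨1 / 2, energyMatrix4, by norm_num, by norm_num, posDef_four, scalar_four⟩
  · exact ⟨9 / 10, energyMatrix5, by norm_num, by norm_num, posDef_five, scalar_five⟩
end

section
/- Let 1 ≤ p ≤ 6, let δ_0, …, δ_p be the p-step BDF coefficients, and let T > 0. Then there exists a constant C, depending only on p and T, with the following property: for every real normed vector space E, every step size τ > 0 and every integer N with Nτ ≤ T, if vectors a_0, …, a_N ∈ E and b_p, …, b_N ∈ E satisfy (1/τ) Σ_{j=0}^p δ_j a_{n−j} = b_n for all p ≤ n ≤ N, then ‖a_n‖² ≤ C τ Σ_{j=p}^n ‖b_j‖² + C Σ_{i=0}^{p−1} ‖a_i‖² for all p ≤ n ≤ N. -/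
open Polynomial

/-- The right shift on sequences, filling in `0` at index `0`. -/
def seqShift (E : Type*) [NormedAddCommGroup E] [NormedSpace ℝ E] :
    Module.End ℝ (ℕ → E) where
  toFun a n := match n with
    | 0 => 0
    | k + 1 => a k
  map_add' a b := by
    funext n
    cases n <;> simp
  map_smul' c a := by
    funext n
    cases n <;> simp

/-- The polynomial with the given list of integer coefficients, constant term first. -/
noncomputable def polyOf : List ℤ → ℝ[X]
  | [] => 0
  | c :: l => (c : ℝ[X]) + X * polyOf l

/-- The sum of the absolute values of the entries of a list of integers. -/
def absSum : List ℤ → ℤ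
  | [] => 0
  | c :: l => |c| + absSum l

section Shift

variable {E : Type*} [NormedAddCommGroup E] [NormedSpace ℝ E]

@[simp] lemma seqShift_zero (a : ℕ → E) : seqShift E a 0 = 0 := rfl

@[simp] lemma seqShift_succ (a : ℕ → E) (n : ℕ) : seqShift E a (n + 1) = a n := rfl

lemma seqShift_pow_apply (j : ℕ) : ∀ (a : ℕ → E) (n : ℕ), j ≤ n →
    (seqShift E ^ j) a n = a (n - j) := by
  induction j with
  | zero => intro a n _; simp
  | succ j ih =>
    intro a n hn
    obtain ⟨k, rfl⟩ : ∃ k, n = k + 1 := ⟨n - 1, by omega⟩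
    rw [pow_succ', Module.End.mul_apply, seqShift_succ, ih a k (by omega)]
    congr 1
    omega

lemma sum_norm_seqShift_le (a : ℕ → E) (m : ℕ) :
    ∑ k ∈ Finset.range m, ‖seqShift E a k‖ ≤ ∑ k ∈ Finset.range m, ‖a k‖ := by
  cases m with
  | zero => simp
  | succ m =>
    rw [Finset.sum_range_succ', Finset.sum_range_succ]
    simp

lemma sum_norm_seqShift_pow_le (a : ℕ → E) (m j : ℕ) :
    ∑ k ∈ Finset.range m, ‖(seqShift E ^ j) a k‖ ≤ ∑ k ∈ Finset.range m, ‖a k‖ := by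
  induction j with
  | zero => simp
  | succ j ih =>
    rw [pow_succ', Module.End.mul_apply]
    exact (sum_norm_seqShift_le _ m).trans ih

lemma sum_norm_aeval_le (f : ℝ[X]) (a : ℕ → E) (m : ℕ) :
    ∑ k ∈ Finset.range m, ‖aeval (seqShift E) f a k‖ ≤
      (∑ j ∈ Finset.range (f.natDegree + 1), |f.coeff j|) * ∑ k ∈ Finset.range m, ‖a k‖ := by
  have h : ∀ k, ‖aeval (seqShift E) f a k‖ ≤
      ∑ j ∈ Finset.range (f.natDegree + 1), |f.coeff j| * ‖(seqShift E ^ j) a k‖ := by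
    intro k
    rw [aeval_eq_sum_range, LinearMap.sum_apply, Finset.sum_apply]
    refine (norm_sum_le _ _).trans (Finset.sum_le_sum fun j _ => ?_)
    simp [norm_smul]
  refine (Finset.sum_le_sum fun k _ => h k).trans ?_
  rw [Finset.sum_comm, Finset.sum_mul]
  refine Finset.sum_le_sum fun j _ => ?_
  rw [← Finset.mul_sum]
  exact mul_le_mul_of_nonneg_left (sum_norm_seqShift_pow_le a m j) (abs_nonneg _)

/-- The bound of `sum_norm_aeval_le` in a form where the coefficient sum is computable. -/
lemma sum_norm_aeval_polyOf_le (l : List ℤ) (a : ℕ → E) (m : ℕ) :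
    ∑ k ∈ Finset.range m, ‖aeval (seqShift E) (polyOf l) a k‖ ≤
      (absSum l : ℝ) * ∑ k ∈ Finset.range m, ‖a k‖ := by
  induction l with
  | nil => simp [polyOf, absSum]
  | cons c l ih =>
    have h : ∀ k, ‖aeval (seqShift E) (polyOf (c :: l)) a k‖ ≤
        |(c : ℝ)| * ‖a k‖ + ‖seqShift E (aeval (seqShift E) (polyOf l) a) k‖ := by
      intro k
      have hc : aeval (seqShift E) (polyOf (c :: l)) a k =
          (c : ℝ) • a k + seqShift E (aeval (seqShift E) (polyOf l) a) k := by
        have : (c : ℝ[X]) = C (c : ℝ) := by simp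
        rw [polyOf, this]
        simp only [map_add, map_mul, aeval_C, aeval_X, LinearMap.add_apply, Pi.add_apply,
          Module.algebraMap_end_apply, Module.End.mul_apply, Pi.smul_apply]
      rw [hc]
      refine (norm_add_le _ _).trans ?_
      rw [norm_smul, Real.norm_eq_abs]
    refine (Finset.sum_le_sum fun k _ => h k).trans ?_
    rw [Finset.sum_add_distrib, ← Finset.mul_sum]
    have h2 := (sum_norm_seqShift_le (aeval (seqShift E) (polyOf l) a) m).trans ih
    simp only [absSum, Int.cast_add, Int.cast_abs, add_mul]
    linarith

/-- Telescoping: a sequence is bounded by the total variation of its extension by zero. -/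
lemma norm_le_sum_norm_sub_seqShift (a : ℕ → E) (n : ℕ) :
    ‖a n‖ ≤ ∑ k ∈ Finset.range (n + 1), ‖(a - seqShift E a) k‖ := by
  induction n with
  | zero => simp
  | succ n ih =>
    rw [Finset.sum_range_succ]
    have h : ‖a (n + 1)‖ ≤ ‖a n‖ + ‖a (n + 1) - a n‖ := by
      simpa using norm_add_le (a n) (a (n + 1) - a n)
    simpa using h.trans (add_le_add_left ih _)

end Shift

lemma natDegree_bdfPoly_le (p : ℕ) : (bdfPoly p).natDegree ≤ p := by
  unfold bdfPoly
  refine natDegree_sum_le_of_forall_le _ _ fun l hl => ?_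
  refine (natDegree_C_mul_le _ _).trans ?_
  refine natDegree_pow_le.trans ?_
  have h1 : (1 - X : ℝ[X]).natDegree ≤ 1 := by
    refine (natDegree_sub_le _ _).trans ?_
    simp
  have h2 := (Finset.mem_Icc.mp hl).2
  nlinarith

/-- Zero-stability in quantitative form: up to the factor `D`, the polynomial `60 Q` inverts
`δ(ζ)/(1-ζ)` with a relative error `R / D` of coefficient sum less than `1`. -/
lemma bdf_certificate (p : ℕ) (hp1 : 1 ≤ p) (hp6 : p ≤ 6) :
    ∃ (Q R : List ℤ) (D : ℤ), absSum R < D ∧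
      (60 * polyOf Q) * bdfPoly p = ((D : ℝ[X]) - polyOf R) * (1 - X) := by
  have hC : ∀ x y : ℝ, 60 * x = y → (60 : ℝ[X]) * C x = C y := by
    intro x y h
    have : (60 : ℝ[X]) = C (60 : ℝ) := (map_ofNat C 60).symm
    rw [this, ← C_mul, h]
  have h2 : (60 : ℝ[X]) * C ((2 : ℝ)⁻¹) = 30 := by
    exact (hC 2⁻¹ 30 (by norm_num)).trans (map_ofNat C 30)
  have h3 : (60 : ℝ[X]) * C ((3 : ℝ)⁻¹) = 20 := by
    exact (hC 3⁻¹ 20 (by norm_num)).trans (map_ofNat C 20)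
  have h4 : (60 : ℝ[X]) * C ((4 : ℝ)⁻¹) = 15 := by
    exact (hC 4⁻¹ 15 (by norm_num)).trans (map_ofNat C 15)
  have h5 : (60 : ℝ[X]) * C ((5 : ℝ)⁻¹) = 12 := by
    exact (hC 5⁻¹ 12 (by norm_num)).trans (map_ofNat C 12)
  have h6 : (60 : ℝ[X]) * C ((6 : ℝ)⁻¹) = 10 := by
    exact (hC 6⁻¹ 10 (by norm_num)).trans (map_ofNat C 10)
  -- `Q` is the power series `1/μ`, truncated and rounded to multiples of `60/D`, times `D/60`.
  interval_cases p
  · refine ⟨[1], [], 60, by decide, ?_⟩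
    simp only [bdfPoly, polyOf, Finset.Icc_self, Finset.sum_singleton, Nat.cast_one, inv_one,
      map_one]
    push_cast
    ring
  · refine ⟨[1], [30, 30], 120, by decide, ?_⟩
    simp only [bdfPoly, polyOf, Finset.sum_Icc_succ_top, Nat.reduceLeDiff, Nat.reduceAdd,
      Finset.Icc_self, Finset.sum_singleton, Nat.cast_one, Nat.cast_ofNat, inv_one, map_one]
    push_cast
    linear_combination ((1) * X ^ 0) *
      ((1 - X) ^ 2 * h2)
  · refine ⟨[1], [10, 70, -20], 120, by decide, ?_⟩
    simp only [bdfPoly, polyOf, Finset.sum_Icc_succ_top, Nat.reduceLeDiff, Nat.reduceAdd,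
      Finset.Icc_self, Finset.sum_singleton, Nat.cast_one, Nat.cast_ofNat, inv_one, map_one]
    push_cast
    linear_combination ((1) * X ^ 0) *
      ((1 - X) ^ 2 * h2 + (1 - X) ^ 3 * h3)
  · refine ⟨[5, 4], [-25, 75, 135, -185, 60], 600, by decide, ?_⟩
    simp only [bdfPoly, polyOf, Finset.sum_Icc_succ_top, Nat.reduceLeDiff, Nat.reduceAdd,
      Finset.Icc_self, Finset.sum_singleton, Nat.cast_one, Nat.cast_ofNat, inv_one, map_one]
    push_cast
    linear_combination ((5) * X ^ 0 + (4) * X ^ 1) *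
      ((1 - X) ^ 2 * h2 + (1 - X) ^ 3 * h3 + (1 - X) ^ 4 * h4)
  · refine ⟨[3, 3, 1], [-51, 78, -59, -59, 16, 27, -12], 360, by decide, ?_⟩
    simp only [bdfPoly, polyOf, Finset.sum_Icc_succ_top, Nat.reduceLeDiff, Nat.reduceAdd,
      Finset.Icc_self, Finset.sum_singleton, Nat.cast_one, Nat.cast_ofNat, inv_one, map_one]
    push_cast
    linear_combination ((3) * X ^ 0 + (3) * X ^ 1 + (1) * X ^ 2) *
      ((1 - X) ^ 2 * h2 + (1 - X) ^ 3 * h3 + (1 - X) ^ 4 * h4 + (1 - X) ^ 5 * h5)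
  · refine ⟨[5, 7, 2, -3, -2], [-15, 36, 12, 23, 12, 227, -69, -120, 94, -20], 720, by decide, ?_⟩
    simp only [bdfPoly, polyOf, Finset.sum_Icc_succ_top, Nat.reduceLeDiff, Nat.reduceAdd,
      Finset.Icc_self, Finset.sum_singleton, Nat.cast_one, Nat.cast_ofNat, inv_one, map_one]
    push_cast
    linear_combination ((5) * X ^ 0 + (7) * X ^ 1 + (2) * X ^ 2 + (-3) * X ^ 3 + (-2) * X ^ 4) *
      ((1 - X) ^ 2 * h2 + (1 - X) ^ 3 * h3 + (1 - X) ^ 4 * h4 + (1 - X) ^ 5 * h5 + (1 - X) ^ 6 * h6)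

/-- The passage from the `ℓ¹` estimate to the squared estimate, with the Cauchy–Schwarz bounds
as hypotheses. -/
lemma sq_le_of_le_mul_add {x K L A B A2 B2 τ T : ℝ} {p : ℕ} (hτ : 0 ≤ τ) (hT : 0 ≤ T)
    (hx : 0 ≤ x) (hA2 : 0 ≤ A2) (hB2 : 0 ≤ B2) (h : x ≤ K * (L * A + τ * B))
    (hA : A ^ 2 ≤ p * A2) (hB : τ * B ^ 2 ≤ T * B2) :
    x ^ 2 ≤ 2 * K ^ 2 * (L ^ 2 * p + T) * τ * B2 + 2 * K ^ 2 * (L ^ 2 * p + T) * A2 := by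
  calc x ^ 2 ≤ (K * (L * A + τ * B)) ^ 2 := pow_le_pow_left₀ hx h 2
    _ ≤ 2 * K ^ 2 * (L ^ 2 * A ^ 2 + τ * (τ * B ^ 2)) := by
        have := mul_nonneg (sq_nonneg K) (sq_nonneg (L * A - τ * B))
        linarith
    _ ≤ 2 * K ^ 2 * (L ^ 2 * (p * A2) + τ * (T * B2)) := by gcongr
    _ ≤ 2 * K ^ 2 * (L ^ 2 * p + T) * τ * B2 + 2 * K ^ 2 * (L ^ 2 * p + T) * A2 := by
        have h1 : 0 ≤ K ^ 2 * L ^ 2 * p * (τ * B2) := by positivity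
        have h2 : 0 ≤ K ^ 2 * T * A2 := by positivity
        linarith

/-- **Abstract stability estimate for the BDF difference equation** (part (b) of the proof
of Proposition 5.1): for `1 ≤ p ≤ 6` and `T > 0` there is a constant `C`, depending only on
`p` and `T`, such that for every real normed vector space `E`, step size `τ > 0` and `N`
with `Nτ ≤ T`, if `(1/τ) ∑_{j=0}^p δ_j a_{n-j} = b_n` for `p ≤ n ≤ N`, then
`‖a n‖² ≤ C τ ∑_{j=p}^n ‖b j‖² + C ∑_{i=0}^{p-1} ‖a i‖²` for `p ≤ n ≤ N`. -/
theorem bdf_difference_stability (p : ℕ) (hp1 : 1 ≤ p) (hp6 : p ≤ 6)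
    (T : ℝ) (hT : 0 < T) :
    ∃ C : ℝ, ∀ (E : Type*) [NormedAddCommGroup E] [NormedSpace ℝ E],
      ∀ τ : ℝ, 0 < τ → ∀ N : ℕ, (N : ℝ) * τ ≤ T →
        ∀ a b : ℕ → E,
          (∀ n, p ≤ n → n ≤ N →
            (1 / τ) • ∑ j ∈ Finset.range (p + 1), (bdfPoly p).coeff j • a (n - j) = b n) →
          ∀ n, p ≤ n → n ≤ N →
            ‖a n‖ ^ 2 ≤ C * τ * ∑ j ∈ Finset.Icc p n, ‖b j‖ ^ 2
              + C * ∑ i ∈ Finset.range p, ‖a i‖ ^ 2 := by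
  obtain ⟨Q, R, D, hRD, hid⟩ := bdf_certificate p hp1 hp6
  have hgap : (0 : ℝ) < (D : ℝ) - absSum R := by
    have : (absSum R : ℝ) < D := by exact_mod_cast hRD
    linarith
  set q : ℝ := ∑ j ∈ Finset.range ((60 * polyOf Q).natDegree + 1), |(60 * polyOf Q).coeff j|
    with hq
  set L : ℝ := ∑ j ∈ Finset.range ((bdfPoly p).natDegree + 1), |(bdfPoly p).coeff j| with hL
  have hq0 : 0 ≤ q := Finset.sum_nonneg fun _ _ => abs_nonneg _
  have hL0 : 0 ≤ L := Finset.sum_nonneg fun _ _ => abs_nonneg _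
  set K : ℝ := q / ((D : ℝ) - absSum R) with hK
  have hK0 : 0 ≤ K := div_nonneg hq0 hgap.le
  refine ⟨2 * K ^ 2 * (L ^ 2 * p + T), ?_⟩
  intro E _ _ τ hτ N hN a b hab n hpn hnN
  set S := seqShift E with hS
  set u : ℕ → E := aeval S (bdfPoly p) a with hu
  set d : ℕ → E := a - S a with hd
  have hub : ∀ k, p ≤ k → k ≤ N → u k = τ • b k := by
    intro k hk hkN
    rw [← hab k hk hkN, smul_smul, mul_one_div_cancel hτ.ne', one_smul, hu,
      aeval_eq_sum_range' (Nat.lt_succ_of_le (natDegree_bdfPoly_le p)), LinearMap.sum_apply,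
      Finset.sum_apply]
    refine Finset.sum_congr rfl fun j hj => ?_
    have hj' : j ≤ k := by
      have := Finset.mem_range.mp hj
      omega
    rw [LinearMap.smul_apply, Pi.smul_apply, seqShift_pow_apply j a k hj']
  -- The certificate, applied to `a`.
  have hdu : ∀ k, (D : ℝ) • d k = aeval S (polyOf R) d k + aeval S (60 * polyOf Q) u k := by
    intro k
    have h := congrArg (fun f : ℝ[X] => aeval S f a k) hid
    have hD : (D : ℝ[X]) = C (D : ℝ) := by simp
    have hda : aeval S (1 - X : ℝ[X]) a = d := by simp [hd]
    simp only [map_mul (aeval S) _ (bdfPoly p), map_mul (aeval S) _ (1 - X : ℝ[X]),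
      Module.End.mul_apply, hda, hD, map_sub (aeval S) (C (D : ℝ)) (polyOf R), LinearMap.sub_apply,
      Pi.sub_apply, aeval_C, Module.algebraMap_end_apply, Pi.smul_apply] at h
    rw [hu, h]
    abel
  have hDpos : (0 : ℝ) ≤ D := by
    have h0 : ∀ l : List ℤ, 0 ≤ absSum l := by
      intro l
      induction l with
      | nil => simp [absSum]
      | cons c l ih => simp only [absSum]; positivity
    have : (0 : ℤ) ≤ D := (h0 R).trans hRD.le
    exact_mod_cast this
  have hsum : (D : ℝ) * ∑ k ∈ Finset.range (n + 1), ‖d k‖ ≤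
      absSum R * ∑ k ∈ Finset.range (n + 1), ‖d k‖ +
        q * ∑ k ∈ Finset.range (n + 1), ‖u k‖ := by
    refine le_trans ?_ (add_le_add (sum_norm_aeval_polyOf_le R d (n + 1))
      (sum_norm_aeval_le (60 * polyOf Q) u (n + 1)))
    rw [Finset.mul_sum, ← Finset.sum_add_distrib]
    refine Finset.sum_le_sum fun k _ => ?_
    have h := norm_add_le (aeval S (polyOf R) d k) (aeval S (60 * polyOf Q) u k)
    rwa [← hdu k, norm_smul, Real.norm_of_nonneg hDpos] at h
  have hdK : ∑ k ∈ Finset.range (n + 1), ‖d k‖ ≤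
      K * ∑ k ∈ Finset.range (n + 1), ‖u k‖ := by
    rw [hK, div_mul_eq_mul_div, le_div_iff₀ hgap]
    linarith
  set A : ℝ := ∑ i ∈ Finset.range p, ‖a i‖ with hA
  set B : ℝ := ∑ j ∈ Finset.Icc p n, ‖b j‖ with hB
  have huAB : ∑ k ∈ Finset.range (n + 1), ‖u k‖ ≤ L * A + τ * B := by
    rw [← Finset.sum_range_add_sum_Ico _ (show p ≤ n + 1 by omega)]
    refine add_le_add (sum_norm_aeval_le (bdfPoly p) a p) (le_of_eq ?_)
    have hI : Finset.Ico p (n + 1) = Finset.Icc p n := by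
      ext k
      simp only [Finset.mem_Ico, Finset.mem_Icc]
      omega
    rw [hB, Finset.mul_sum, hI]
    refine Finset.sum_congr rfl fun k hk => ?_
    obtain ⟨hk1, hk2⟩ := Finset.mem_Icc.mp hk
    rw [hub k hk1 (hk2.trans hnN), norm_smul, Real.norm_of_nonneg hτ.le]
  have han : ‖a n‖ ≤ K * (L * A + τ * B) :=
    ((norm_le_sum_norm_sub_seqShift a n).trans hdK).trans
      (mul_le_mul_of_nonneg_left huAB hK0)
  set A2 : ℝ := ∑ i ∈ Finset.range p, ‖a i‖ ^ 2 with hA2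
  set B2 : ℝ := ∑ j ∈ Finset.Icc p n, ‖b j‖ ^ 2 with hB2
  have hA20 : 0 ≤ A2 := Finset.sum_nonneg fun _ _ => sq_nonneg _
  have hB20 : 0 ≤ B2 := Finset.sum_nonneg fun _ _ => sq_nonneg _
  have hAA : A ^ 2 ≤ p * A2 := by
    simpa using sq_sum_le_card_mul_sum_sq (s := Finset.range p) (f := fun i => ‖a i‖)
  have hBB : τ * B ^ 2 ≤ T * B2 := by
    have h1 : B ^ 2 ≤ ((Finset.Icc p n).card : ℝ) * B2 :=
      sq_sum_le_card_mul_sum_sq (s := Finset.Icc p n) (f := fun i => ‖b i‖)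
    -- Since `p ≥ 1`, there are at most `n ≤ N` summands.
    have h2 : ((Finset.Icc p n).card : ℝ) ≤ N := by
      rw [Nat.card_Icc]
      exact_mod_cast (by omega : n + 1 - p ≤ N)
    calc τ * B ^ 2 ≤ τ * (N * B2) :=
          mul_le_mul_of_nonneg_left (h1.trans (mul_le_mul_of_nonneg_right h2 hB20)) hτ.le
      _ = (N * τ) * B2 := by ring
      _ ≤ T * B2 := mul_le_mul_of_nonneg_right hN hB20
  exact sq_le_of_le_mul_add hτ.le hT.le (norm_nonneg _) hA20 hB20 han hAA hBB
end
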